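/- As the real variable x tends to 0, (1/4)·∑_{n=0}^∞ 2^{−2(n+x)} · [ (1/2)_{n+x} / (1)_{n+x} ]³ · (6(n+x)+1) = 1/π − π x² + 16 G x³ + O(x⁴), where G is Catalan's constant; in particular the coefficients of x⁰, x¹, x², x³ in the expansion are 1/π, 0, −π, 16G respectively. -/

import Mathlib

/-- The Pochhammer symbol for real index: `(a)_t = Γ(a+t)/Γ(a)`. -/
noncomputable def pochG (a t : ℝ) : ℝ := Real.Gamma (a + t) / Real.Gamma a

/-- Catalan's constant `G = ∑_{n≥0} (-1)^n/(2n+1)²`. -/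
noncomputable def catalan' : ℝ := ∑' n : ℕ, (-1 : ℝ) ^ n / (2 * (n : ℝ) + 1) ^ 2

open Filter Topology

/-- The hypergeometric kernel of the WZ pair. -/
noncomputable def wzKernel (t k : ℝ) : ℝ :=
  (2 : ℝ) ^ (-(2 : ℝ) * (t + k)) * Real.Gamma (t + k + 1 / 2) ^ 3 /
    (√Real.pi * Real.Gamma (t + k + 1) * Real.Gamma (t + 1) ^ 2 * Real.Gamma (k + 1 / 2) ^ 2)

/-- The summand `G(t, k)` of the WZ pair, summed over `t`. -/
noncomputable def wzG (t k : ℝ) : ℝ := wzKernel t k * (6 * t + 2 * k + 1)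

/-- The summand `F(t, k)` of the WZ pair, summed over `k`. -/
noncomputable def wzF (t k : ℝ) : ℝ :=
  -(wzKernel t k * (t ^ 2 * (2 * t + 6 * k + 3) / (k + 1 / 2) ^ 2))

lemma wzKernel_pos {t k : ℝ} (ht : -1 / 2 < t) (hk : 0 ≤ k) : 0 < wzKernel t k := by
  have h1 := Real.Gamma_pos_of_pos (show 0 < t + k + 1 / 2 by linarith)
  have h2 := Real.Gamma_pos_of_pos (show 0 < t + k + 1 by linarith)
  have h3 := Real.Gamma_pos_of_pos (show 0 < t + 1 by linarith)
  have h4 := Real.Gamma_pos_of_pos (show 0 < k + 1 / 2 by linarith)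
  have h5 := Real.pi_pos
  unfold wzKernel
  positivity

lemma wzKernel_add_one_left {t k : ℝ} (ht : -1 / 2 < t) (hk : 0 ≤ k) :
    wzKernel (t + 1) k
      = wzKernel t k * ((t + k + 1 / 2) ^ 3 / (4 * (t + k + 1) * (t + 1) ^ 2)) := by
  have h1 := Real.Gamma_pos_of_pos (show 0 < t + k + 1 / 2 by linarith)
  have h2 := Real.Gamma_pos_of_pos (show 0 < t + k + 1 by linarith)
  have h3 := Real.Gamma_pos_of_pos (show 0 < t + 1 by linarith)
  have h4 := Real.Gamma_pos_of_pos (show 0 < k + 1 / 2 by linarith)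
  have h5 := Real.pi_pos
  have h6 : t + k + 1 ≠ 0 := by linarith
  have h7 : t + 1 ≠ 0 := by linarith
  have h8 : t + k + 1 / 2 ≠ 0 := by linarith
  unfold wzKernel
  rw [show t + 1 + k + 1 / 2 = (t + k + 1 / 2) + 1 by ring, Real.Gamma_add_one h8,
    show t + 1 + k + 1 = (t + k + 1) + 1 by ring, Real.Gamma_add_one h6, Real.Gamma_add_one h7,
    show -(2 : ℝ) * (t + 1 + k) = -2 * (t + k) - 2 by ring, Real.rpow_sub two_pos]
  norm_num
  field_simp

lemma wzKernel_add_one_right {t k : ℝ} (ht : -1 / 2 < t) (hk : 0 ≤ k) :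
    wzKernel t (k + 1)
      = wzKernel t k * ((t + k + 1 / 2) ^ 3 / (4 * (t + k + 1) * (k + 1 / 2) ^ 2)) := by
  have h1 := Real.Gamma_pos_of_pos (show 0 < t + k + 1 / 2 by linarith)
  have h2 := Real.Gamma_pos_of_pos (show 0 < t + k + 1 by linarith)
  have h3 := Real.Gamma_pos_of_pos (show 0 < t + 1 by linarith)
  have h4 := Real.Gamma_pos_of_pos (show 0 < k + 1 / 2 by linarith)
  have h5 := Real.pi_pos
  have h6 : t + k + 1 ≠ 0 := by linarith
  have h7 : k + 1 / 2 ≠ 0 := by linarith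
  have h8 : t + k + 1 / 2 ≠ 0 := by linarith
  unfold wzKernel
  rw [show t + (k + 1) + 1 / 2 = (t + k + 1 / 2) + 1 by ring, Real.Gamma_add_one h8,
    show t + (k + 1) + 1 = (t + k + 1) + 1 by ring, Real.Gamma_add_one h6,
    show k + 1 + 1 / 2 = (k + 1 / 2) + 1 by ring, Real.Gamma_add_one h7,
    show -(2 : ℝ) * (t + (k + 1)) = -2 * (t + k) - 2 by ring, Real.rpow_sub two_pos]
  norm_num
  field_simp

lemma wzG_sub_eq_wzF_sub {t k : ℝ} (ht : -1 / 2 < t) (hk : 0 ≤ k) :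
    wzG t (k + 1) - wzG t k = wzF (t + 1) k - wzF t k := by
  have h6 : t + k + 1 ≠ 0 := by linarith
  have h7 : k + 1 / 2 ≠ 0 := by linarith
  have h8 : t + 1 ≠ 0 := by linarith
  unfold wzG wzF
  rw [wzKernel_add_one_left ht hk, wzKernel_add_one_right ht hk]
  have h9 : k * 2 + 1 ≠ 0 := by linarith
  field_simp
  ring

/-- The ratio test for kernels multiplied by a cubic weight. -/
lemma summable_mul_cube_of_ratio {u r : ℕ → ℝ} (hu : ∀ n, 0 < u n)
    (hr : ∀ n, u (n + 1) = u n * r n) (hlim : Tendsto r atTop (𝓝 (1 / 4))) :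
    Summable fun n => u n * ((n : ℝ) + 1) ^ 3 := by
  refine summable_of_ratio_test_tendsto_lt_one (l := 1 / 4) (by norm_num) ?_ ?_
  · exact Eventually.of_forall fun n => by have := hu n; positivity
  · have h1 : Tendsto (fun n : ℕ => ((n : ℝ) + 2) / ((n : ℝ) + 1)) atTop (𝓝 1) := by
      have h2 : Tendsto (fun n : ℕ => 1 + 1 / ((n : ℝ) + 1)) atTop (𝓝 (1 + 0)) :=
        tendsto_const_nhds.add tendsto_one_div_add_atTop_nhds_zero_nat
      rw [add_zero] at h2
      refine h2.congr fun n => ?_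
      field_simp
      ring
    have h3 := hlim.mul (h1.pow 3)
    rw [one_pow, mul_one] at h3
    refine h3.congr fun n => ?_
    have hn := hu n
    have hr' : 0 < r n := by
      have := hu (n + 1)
      rw [hr] at this
      exact pos_of_mul_pos_right this hn.le
    rw [hr, Real.norm_of_nonneg (by positivity), Real.norm_of_nonneg (by positivity)]
    push_cast
    field_simp
    ring

lemma tendsto_natCast_add_div (a b : ℝ) :
    Tendsto (fun n : ℕ => ((n : ℝ) + a) / ((n : ℝ) + b)) atTop (𝓝 1) := by
  have h0 : Tendsto (fun n : ℕ => (n : ℝ) + b) atTop atTop :=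
    tendsto_atTop_add_const_right _ _ tendsto_natCast_atTop_atTop
  have h2 : Tendsto (fun n : ℕ => 1 + (a - b) / ((n : ℝ) + b)) atTop (𝓝 (1 + 0)) :=
    tendsto_const_nhds.add (h0.const_div_atTop _)
  rw [add_zero] at h2
  refine h2.congr' ?_
  filter_upwards [h0.eventually_gt_atTop 0] with n hn
  field_simp
  ring

lemma summable_wzKernel_left {x k : ℝ} (hx : -1 / 2 < x) (hk : 0 ≤ k) :
    Summable fun n : ℕ => wzKernel (n + x) k * ((n : ℝ) + 1) ^ 3 := by
  refine summable_mul_cube_of_ratio (r := fun n : ℕ => ((n : ℝ) + x + k + 1 / 2) ^ 3 /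
    (4 * ((n : ℝ) + x + k + 1) * ((n : ℝ) + x + 1) ^ 2)) (fun n => ?_) (fun n => ?_) ?_
  · have : (0 : ℝ) ≤ n := n.cast_nonneg
    exact wzKernel_pos (by linarith) hk
  · have : (0 : ℝ) ≤ n := n.cast_nonneg
    rw [← wzKernel_add_one_left (by linarith) hk]
    push_cast
    congr 1
    ring
  · have h := (((tendsto_natCast_add_div (x + k + 1 / 2) (x + k + 1)).mul
      ((tendsto_natCast_add_div (x + k + 1 / 2) (x + 1)).pow 2)).const_mul (1 / 4))
    norm_num at h
    convert h using 1
    · ext n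
      have : (0 : ℝ) ≤ n := n.cast_nonneg
      have h6 : n + x + k + 1 ≠ 0 := by linarith
      have h7 : n + x + 1 ≠ 0 := by linarith
      have h8 : n + (x + k + 1) ≠ 0 := by linarith
      have h9 : n + (x + 1) ≠ 0 := by linarith
      field_simp
      ring

lemma summable_wzKernel_right {x : ℝ} (hx : -1 / 2 < x) :
    Summable fun k : ℕ => wzKernel x k * ((k : ℝ) + 1) ^ 3 := by
  refine summable_mul_cube_of_ratio (r := fun k : ℕ => (x + k + 1 / 2) ^ 3 /
    (4 * (x + k + 1) * ((k : ℝ) + 1 / 2) ^ 2)) (fun n => ?_) (fun n => ?_) ?_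
  · exact wzKernel_pos hx n.cast_nonneg
  · rw [← wzKernel_add_one_right hx n.cast_nonneg]
    push_cast
    rfl
  · have h := (((tendsto_natCast_add_div (x + 1 / 2) (x + 1)).mul
      ((tendsto_natCast_add_div (x + 1 / 2) (1 / 2)).pow 2)).const_mul (1 / 4))
    norm_num at h
    convert h using 1
    · ext n
      have : (0 : ℝ) ≤ n := n.cast_nonneg
      have h6 : x + n + 1 ≠ 0 := by linarith
      have h7 : (n : ℝ) + 1 / 2 ≠ 0 := by linarith
      have h8 : n + (x + 1) ≠ 0 := by linarith
      field_simp
      ring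

lemma Summable.of_mul_cube {u v : ℕ → ℝ} (C : ℝ) (hu : ∀ n, 0 ≤ u n)
    (hs : Summable fun n : ℕ => u n * ((n : ℝ) + 1) ^ 3)
    (hv : ∀ n : ℕ, |v n| ≤ C * ((n : ℝ) + 1) ^ 3) : Summable fun n => u n * v n := by
  refine Summable.of_norm_bounded (hs.mul_left C) fun n => ?_
  rw [norm_mul, Real.norm_of_nonneg (hu n), Real.norm_eq_abs]
  calc u n * |v n| ≤ u n * (C * ((n : ℝ) + 1) ^ 3) := mul_le_mul_of_nonneg_left (hv n) (hu n)
    _ = _ := by ring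

lemma le_cube_of_one_le {y : ℝ} (hy : 1 ≤ y) : 1 ≤ y ^ 3 ∧ y ≤ y ^ 3 := by
  constructor <;> nlinarith [mul_nonneg (sub_nonneg.2 hy) (sub_nonneg.2 hy), sq_nonneg y]

lemma summable_wzG_left {x k : ℝ} (hx : -1 / 2 < x) (hk : 0 ≤ k) :
    Summable fun n : ℕ => wzG (n + x) k := by
  refine Summable.of_mul_cube (6 + |6 * x + 2 * k + 1|) (fun n => ?_)
    (summable_wzKernel_left hx hk) fun n => ?_
  · have : (0 : ℝ) ≤ n := n.cast_nonneg
    exact (wzKernel_pos (by linarith) hk).le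
  · have hn : (0 : ℝ) ≤ n := n.cast_nonneg
    obtain ⟨h1, h2⟩ := le_cube_of_one_le (show (1 : ℝ) ≤ n + 1 by linarith)
    have h3 := abs_nonneg (6 * x + 2 * k + 1)
    calc |6 * ((n : ℝ) + x) + 2 * k + 1| = |6 * (n : ℝ) + (6 * x + 2 * k + 1)| := by ring_nf
      _ ≤ |6 * (n : ℝ)| + |6 * x + 2 * k + 1| := abs_add_le _ _
      _ = 6 * (n : ℝ) + |6 * x + 2 * k + 1| := by rw [abs_of_nonneg (by positivity)]
      _ ≤ _ := by nlinarith

lemma summable_wzF_left {x k : ℝ} (hx : -1 / 2 < x) (hk : 0 ≤ k) :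
    Summable fun n : ℕ => wzF (n + x) k := by
  refine Summable.neg (Summable.of_mul_cube
    ((1 + |x|) ^ 2 * (2 + |2 * x + 6 * k + 3|) / (k + 1 / 2) ^ 2) (fun n => ?_)
    (summable_wzKernel_left hx hk) fun n => ?_)
  · have : (0 : ℝ) ≤ n := n.cast_nonneg
    exact (wzKernel_pos (by linarith) hk).le
  · have hn : (0 : ℝ) ≤ n := n.cast_nonneg
    have h1 : |(n : ℝ) + x| ≤ (1 + |x|) * ((n : ℝ) + 1) := by
      refine (abs_add_le _ _).trans ?_
      rw [abs_of_nonneg hn]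
      nlinarith [abs_nonneg x]
    have h2 : |2 * ((n : ℝ) + x) + 6 * k + 3| ≤ (2 + |2 * x + 6 * k + 3|) * ((n : ℝ) + 1) := by
      have h3 := abs_nonneg (2 * x + 6 * k + 3)
      calc |2 * ((n : ℝ) + x) + 6 * k + 3| = |2 * (n : ℝ) + (2 * x + 6 * k + 3)| := by ring_nf
        _ ≤ |2 * (n : ℝ)| + |2 * x + 6 * k + 3| := abs_add_le _ _
        _ = 2 * (n : ℝ) + |2 * x + 6 * k + 3| := by rw [abs_of_nonneg (by positivity)]
        _ ≤ _ := by nlinarith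
    rw [abs_div, abs_mul, abs_pow, abs_of_pos (show 0 < (k + 1 / 2) ^ 2 by positivity),
      div_mul_eq_mul_div]
    refine div_le_div_of_nonneg_right ?_ (by positivity)
    calc _ ≤ ((1 + |x|) * ((n : ℝ) + 1)) ^ 2 * ((2 + |2 * x + 6 * k + 3|) * ((n : ℝ) + 1)) := by
          gcongr
      _ = _ := by ring

lemma summable_wzG_right {x : ℝ} (hx : -1 / 2 < x) :
    Summable fun k : ℕ => wzG x k := by
  refine Summable.of_mul_cube (2 + |6 * x + 1|) (fun k => (wzKernel_pos hx k.cast_nonneg).le)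
    (summable_wzKernel_right hx) fun n => ?_
  have hn : (0 : ℝ) ≤ n := n.cast_nonneg
  obtain ⟨h1, h2⟩ := le_cube_of_one_le (show (1 : ℝ) ≤ n + 1 by linarith)
  have h3 := abs_nonneg (6 * x + 1)
  calc |6 * x + 2 * n + 1| = |2 * (n : ℝ) + (6 * x + 1)| := by ring_nf
    _ ≤ |2 * (n : ℝ)| + |6 * x + 1| := abs_add_le _ _
    _ = 2 * (n : ℝ) + |6 * x + 1| := by rw [abs_of_nonneg (by positivity)]
    _ ≤ _ := by nlinarith

lemma summable_wzF_right {x : ℝ} (hx : -1 / 2 < x) :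
    Summable fun k : ℕ => wzF x k := by
  refine Summable.neg (Summable.of_mul_cube
    (x ^ 2 * (6 + |2 * x + 3|) * 4) (fun k => (wzKernel_pos hx k.cast_nonneg).le)
    (summable_wzKernel_right hx) fun n => ?_)
  have hn : (0 : ℝ) ≤ n := n.cast_nonneg
  obtain ⟨h1, h2⟩ := le_cube_of_one_le (show (1 : ℝ) ≤ n + 1 by linarith)
  have h4 : |2 * x + 6 * n + 3| ≤ (6 + |2 * x + 3|) * ((n : ℝ) + 1) ^ 3 := by
    have h3 := abs_nonneg (2 * x + 3)
    calc |2 * x + 6 * n + 3| = |6 * (n : ℝ) + (2 * x + 3)| := by ring_nf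
      _ ≤ |6 * (n : ℝ)| + |2 * x + 3| := abs_add_le _ _
      _ = 6 * (n : ℝ) + |2 * x + 3| := by rw [abs_of_nonneg (by positivity)]
      _ ≤ _ := by nlinarith
  rw [abs_div, abs_mul, abs_of_nonneg (sq_nonneg x),
    abs_of_pos (show 0 < ((n : ℝ) + 1 / 2) ^ 2 by positivity), div_le_iff₀ (by positivity)]
  have h5 : 1 ≤ 4 * ((n : ℝ) + 1 / 2) ^ 2 := by nlinarith
  calc x ^ 2 * |2 * x + 6 * n + 3| ≤ x ^ 2 * ((6 + |2 * x + 3|) * ((n : ℝ) + 1) ^ 3) * 1 := by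
        rw [mul_one]; gcongr
    _ ≤ x ^ 2 * ((6 + |2 * x + 3|) * ((n : ℝ) + 1) ^ 3) * (4 * ((n : ℝ) + 1 / 2) ^ 2) := by gcongr
    _ = _ := by ring

lemma Gamma_add_le_mul_rpow {s x : ℝ} (hs : 0 < s) (hx0 : 0 ≤ x) (hx1 : x ≤ 1) :
    Real.Gamma (s + x) ≤ Real.Gamma s * s ^ x := by
  rcases hx0.eq_or_lt with rfl | hx0
  · simp
  rcases hx1.eq_or_lt with rfl | hx1
  · rw [Real.Gamma_add_one hs.ne', Real.rpow_one, mul_comm]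
  have h := Real.Gamma_mul_add_mul_le_rpow_Gamma_mul_rpow_Gamma hs
    (show 0 < s + 1 by linarith) (show 0 < 1 - x by linarith) hx0 (by ring)
  have hG := Real.Gamma_pos_of_pos hs
  rw [show (1 - x) * s + x * (s + 1) = s + x by ring, Real.Gamma_add_one hs.ne',
    Real.mul_rpow hs.le hG.le] at h
  refine h.trans_eq ?_
  rw [mul_left_comm, ← Real.rpow_add hG, sub_add_cancel, Real.rpow_one, mul_comm]

lemma Gamma_mul_rpow_le {s x : ℝ} (hs : 0 < s) (hx0 : 0 ≤ x) (hx1 : x ≤ 1) :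
    Real.Gamma s * s ^ x ≤ (1 + 1 / s) * Real.Gamma (s + x) := by
  have hG := Real.Gamma_pos_of_pos hs
  have hGx := Real.Gamma_pos_of_pos (show 0 < s + x by linarith)
  have h := Gamma_add_le_mul_rpow (show 0 < s + x by linarith) (sub_nonneg.2 hx1)
    (show 1 - x ≤ 1 by linarith)
  rw [show s + x + (1 - x) = s + 1 by ring, Real.Gamma_add_one hs.ne'] at h
  have h1 : (s + x) ^ (1 - x) ≤ (s + 1) ^ (1 - x) := by gcongr
  have h2 : (s + 1) ^ (1 - x) * s ^ x ≤ s + 1 := by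
    calc (s + 1) ^ (1 - x) * s ^ x ≤ (s + 1) ^ (1 - x) * (s + 1) ^ x := by gcongr; linarith
      _ = s + 1 := by rw [← Real.rpow_add (by linarith), sub_add_cancel, Real.rpow_one]
  have h3 : s * (Real.Gamma s * s ^ x) ≤ (s + 1) * Real.Gamma (s + x) := by
    calc s * (Real.Gamma s * s ^ x) = (s * Real.Gamma s) * s ^ x := by ring
      _ ≤ (Real.Gamma (s + x) * (s + 1) ^ (1 - x)) * s ^ x := by
          refine mul_le_mul_of_nonneg_right (h.trans ?_) (by positivity)
          gcongr
      _ = Real.Gamma (s + x) * ((s + 1) ^ (1 - x) * s ^ x) := by ring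
      _ ≤ Real.Gamma (s + x) * (s + 1) := by gcongr
      _ = _ := by ring
  rw [show (1 + 1 / s) * Real.Gamma (s + x) = (s + 1) * Real.Gamma (s + x) / s by field_simp,
    le_div_iff₀ hs]
  linarith

lemma wzKernel_add_le {t k x : ℝ} (ht : 0 < t) (hk : 0 ≤ k) (hx0 : 0 ≤ x) (hx1 : x ≤ 1) :
    wzKernel (t + x) k
      ≤ (1 + 1 / t) ^ 3 * ((1 - x) * wzKernel t k + x * wzKernel (t + 1) k) := by
  set w := (t + k + 1 / 2) ^ 3 / (4 * (t + k + 1) * (t + 1) ^ 2) with hw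
  have hw0 : 0 < w := by positivity
  have hH := wzKernel_pos (show -1 / 2 < t by linarith) hk
  have hG1 := Real.Gamma_pos_of_pos (show 0 < t + k + 1 / 2 by linarith)
  have hG1x := Real.Gamma_pos_of_pos (show 0 < t + k + 1 / 2 + x by linarith)
  have hG2 := Real.Gamma_pos_of_pos (show 0 < t + k + 1 by linarith)
  have hG2x := Real.Gamma_pos_of_pos (show 0 < t + k + 1 + x by linarith)
  have hG3 := Real.Gamma_pos_of_pos (show 0 < t + 1 by linarith)
  have hG3x := Real.Gamma_pos_of_pos (show 0 < t + 1 + x by linarith)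
  have hG4 := Real.Gamma_pos_of_pos (show 0 < k + 1 / 2 by linarith)
  have hpi := Real.pi_pos
  have h1 := Gamma_add_le_mul_rpow (show 0 < t + k + 1 / 2 by linarith) hx0 hx1
  have h2 : Real.Gamma (t + k + 1) * (t + k + 1) ^ x ≤ (1 + 1 / t) * Real.Gamma (t + k + 1 + x) := by
    refine (Gamma_mul_rpow_le (show 0 < t + k + 1 by linarith) hx0 hx1).trans ?_
    gcongr
    linarith
  have h3 : Real.Gamma (t + 1) * (t + 1) ^ x ≤ (1 + 1 / t) * Real.Gamma (t + 1 + x) := by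
    refine (Gamma_mul_rpow_le (show 0 < t + 1 by linarith) hx0 hx1).trans ?_
    gcongr
    linarith
  have hwx : w ^ x ≤ 1 - x + x * w := by
    have := Real.geom_mean_le_arith_mean2_weighted (sub_nonneg.2 hx1) hx0 zero_le_one hw0.le
      (by ring)
    simpa using this
  have key : wzKernel (t + x) k ≤ (1 + 1 / t) ^ 3 * (wzKernel t k * w ^ x) := by
    have hwe : w ^ x = (2 : ℝ) ^ (-(2 : ℝ) * x) * ((t + k + 1 / 2) ^ x) ^ 3
        / ((t + k + 1) ^ x * ((t + 1) ^ x) ^ 2) := by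
      have h4 : (4 : ℝ) ^ x = (2 : ℝ) ^ (2 * x) := by
        rw [Real.rpow_mul two_pos.le]; norm_num
      rw [hw, Real.div_rpow (by positivity) (by positivity), Real.mul_rpow (by positivity)
        (by positivity), Real.mul_rpow (by positivity) (by positivity), h4, neg_mul,
        Real.rpow_neg two_pos.le, ← Real.rpow_natCast_mul (by positivity),
        ← Real.rpow_natCast_mul (by positivity), mul_comm (((3 : ℕ) : ℝ)),
        mul_comm (((2 : ℕ) : ℝ)), Real.rpow_mul_natCast (by positivity),
        Real.rpow_mul_natCast (by positivity)]
      field_simp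
    rw [hwe]
    unfold wzKernel
    rw [show t + x + k + 1 / 2 = t + k + 1 / 2 + x by ring,
      show t + x + k + 1 = t + k + 1 + x by ring, show t + x + 1 = t + 1 + x by ring,
      show -(2 : ℝ) * (t + x + k) = -2 * (t + k) + -2 * x by ring, Real.rpow_add two_pos]
    rw [div_mul_div_comm, ← mul_div_assoc, div_le_div_iff₀ (by positivity) (by positivity)]
    calc _ = ((2 : ℝ) ^ (-2 * (t + k)) * 2 ^ (-2 * x) * √Real.pi * Real.Gamma (k + 1 / 2) ^ 2) *
          (Real.Gamma (t + k + 1 / 2 + x) ^ 3 * (Real.Gamma (t + k + 1) * (t + k + 1) ^ x) *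
            (Real.Gamma (t + 1) * (t + 1) ^ x) ^ 2) := by ring
      _ ≤ ((2 : ℝ) ^ (-2 * (t + k)) * 2 ^ (-2 * x) * √Real.pi * Real.Gamma (k + 1 / 2) ^ 2) *
          ((Real.Gamma (t + k + 1 / 2) * (t + k + 1 / 2) ^ x) ^ 3 *
            ((1 + 1 / t) * Real.Gamma (t + k + 1 + x)) *
            ((1 + 1 / t) * Real.Gamma (t + 1 + x)) ^ 2) := by gcongr
      _ = _ := by ring
  refine key.trans ?_
  rw [wzKernel_add_one_left (show -1 / 2 < t by linarith) hk, ← hw]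
  gcongr
  nlinarith

lemma wzG_add_le {t k x : ℝ} (ht : 0 < t) (hk : 0 ≤ k) (hx0 : 0 ≤ x) (hx1 : x ≤ 1) :
    wzG (t + x) k ≤ (1 + 1 / t) ^ 4 * ((1 - x) * wzG t k + x * wzG (t + 1) k) := by
  have h1 := wzKernel_add_le ht hk hx0 hx1
  have hH := wzKernel_pos (show -1 / 2 < t by linarith) hk
  have hH1 := wzKernel_pos (show -1 / 2 < t + 1 by linarith) hk
  have hx1' := sub_nonneg.2 hx1
  have h2 : 6 * (t + x) + 2 * k + 1 ≤ (1 + 1 / t) * (6 * t + 2 * k + 1) := by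
    have : (1 + 1 / t) * (6 * t + 2 * k + 1) = 6 * t + 2 * k + 1 + 6 + (2 * k + 1) / t := by
      field_simp; ring
    rw [this]
    have : 0 ≤ (2 * k + 1) / t := by positivity
    linarith
  unfold wzG
  calc _ ≤ ((1 + 1 / t) ^ 3 * ((1 - x) * wzKernel t k + x * wzKernel (t + 1) k)) *
        ((1 + 1 / t) * (6 * t + 2 * k + 1)) := by gcongr
    _ = (1 + 1 / t) ^ 4 * ((1 - x) * (wzKernel t k * (6 * t + 2 * k + 1)) +
        x * (wzKernel (t + 1) k * (6 * t + 2 * k + 1))) := by ring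
    _ ≤ _ := by gcongr; linarith

lemma wzG_pos {t k : ℝ} (ht : 0 ≤ t) (hk : 0 ≤ k) : 0 < wzG t k :=
  mul_pos (wzKernel_pos (by linarith) hk) (by positivity)

lemma tsum_wzG_add_one {x k : ℝ} (hx : -1 / 2 < x) (hk : 0 ≤ k) :
    ∑' n : ℕ, wzG (n + x) (k + 1) = ∑' n : ℕ, wzG (n + x) k - wzF x k := by
  have h1 := (summable_wzG_left hx (show 0 ≤ k + 1 by linarith)).hasSum.sub
    (summable_wzG_left hx hk).hasSum
  have h2 : Tendsto (fun N : ℕ => wzF (N + x) k - wzF x k) atTop (𝓝 (0 - wzF x k)) :=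
    (summable_wzF_left hx hk).tendsto_atTop_zero.sub_const _
  have h3 := h1.tendsto_sum_nat
  have h4 : ∀ N : ℕ, ∑ n ∈ Finset.range N, (wzG (n + x) (k + 1) - wzG (n + x) k)
      = wzF (N + x) k - wzF x k := by
    intro N
    induction N with
    | zero => simp
    | succ N ih =>
      rw [Finset.sum_range_succ, ih, wzG_sub_eq_wzF_sub (by
        have : (0 : ℝ) ≤ N := N.cast_nonneg
        linarith) hk]
      push_cast
      rw [show (N : ℝ) + x + 1 = N + 1 + x by ring]
      ring
  simp only [h4] at h3
  have := tendsto_nhds_unique h3 h2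
  linarith

/-- The limit as `k → ∞` of `∑ₙ G(n + x, k)`, obtained by telescoping the WZ relation. -/
noncomputable def wzLimit (x : ℝ) : ℝ := ∑' n : ℕ, wzG (n + x) 0 - ∑' k : ℕ, wzF x k

lemma tendsto_tsum_wzG {x : ℝ} (hx : -1 / 2 < x) :
    Tendsto (fun k : ℕ => ∑' n : ℕ, wzG (n + x) k) atTop (𝓝 (wzLimit x)) := by
  have h := ((summable_wzF_right hx).hasSum.tendsto_sum_nat).const_sub (∑' n : ℕ, wzG (n + x) 0)
  refine h.congr fun K => ?_
  induction K with
  | zero => simp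
  | succ K ih =>
    rw [Nat.cast_succ, tsum_wzG_add_one hx K.cast_nonneg, ← ih, Finset.sum_range_succ]
    ring

lemma wzLimit_add_one {x : ℝ} (hx : -1 / 2 < x) : wzLimit (x + 1) = wzLimit x := by
  have h1 := tendsto_tsum_wzG hx
  have h2 := (tendsto_tsum_wzG (show -1 / 2 < x + 1 by linarith)).add
    (summable_wzG_right hx).tendsto_atTop_zero
  rw [add_zero] at h2
  refine tendsto_nhds_unique h2 (h1.congr fun k => ?_)
  rw [(summable_wzG_left hx k.cast_nonneg).tsum_eq_zero_add]
  simp only [Nat.cast_zero, zero_add, Nat.cast_succ]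
  rw [add_comm]
  congr 1
  refine tsum_congr fun n => ?_
  ring_nf

lemma wzLimit_add_le {s x : ℝ} (hs : 0 ≤ s) (hx0 : 0 ≤ x) (hx1 : x ≤ 1) :
    wzLimit (s + x) ≤ wzLimit s := by
  have hs' : -1 / 2 < s := by linarith
  have hN : ∀ N : ℕ, wzLimit (s + x) ≤ (1 + 1 / ((N : ℝ) + 1)) ^ 4 * wzLimit s := by
    intro N
    have hlim : Tendsto (fun k : ℕ => ∑ n ∈ Finset.range (N + 1), wzG (n + (s + x)) k +
        (1 + 1 / ((N : ℝ) + 1)) ^ 4 * ((1 - x) * ∑' n : ℕ, wzG (n + s) k +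
          x * ∑' n : ℕ, wzG (n + (s + 1)) k)) atTop
        (𝓝 (∑ n ∈ Finset.range (N + 1), 0 +
          (1 + 1 / ((N : ℝ) + 1)) ^ 4 * ((1 - x) * wzLimit s + x * wzLimit (s + 1)))) := by
      refine Tendsto.add (tendsto_finsetSum _ fun n _ => ?_) (Tendsto.const_mul _ (Tendsto.add
        ((tendsto_tsum_wzG hs').const_mul _)
        ((tendsto_tsum_wzG (show -1 / 2 < s + 1 by linarith)).const_mul _)))
      have : (0 : ℝ) ≤ n := n.cast_nonneg
      exact (summable_wzG_right (by linarith)).tendsto_atTop_zero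
    rw [wzLimit_add_one hs', Finset.sum_const_zero, zero_add, ← add_mul, sub_add_cancel,
      one_mul] at hlim
    refine le_of_tendsto_of_tendsto' (tendsto_tsum_wzG (show -1 / 2 < s + x by linarith)) hlim
      fun k => ?_
    have hk : (0 : ℝ) ≤ k := k.cast_nonneg
    rw [← (summable_wzG_left (show -1 / 2 < s + x by linarith) hk).sum_add_tsum_nat_add (N + 1)]
    gcongr
    have hsum0 := (summable_wzG_left hs' hk)
    have hsum1 := (summable_wzG_left (show -1 / 2 < s + 1 by linarith) hk)
    have htail0 := hsum0.sum_add_tsum_nat_add (N + 1)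
    have htail1 := hsum1.sum_add_tsum_nat_add (N + 1)
    have hpos0 : 0 ≤ ∑ n ∈ Finset.range (N + 1), wzG (n + s) k :=
      Finset.sum_nonneg fun n _ => (wzG_pos (by positivity) hk).le
    have hpos1 : 0 ≤ ∑ n ∈ Finset.range (N + 1), wzG (n + (s + 1)) k :=
      Finset.sum_nonneg fun n _ => (wzG_pos (by positivity) hk).le
    have hs0 := (summable_nat_add_iff (N + 1)).2 hsum0
    have hs1 := (summable_nat_add_iff (N + 1)).2 hsum1
    have hsx := (summable_nat_add_iff (N + 1)).2
      (summable_wzG_left (show -1 / 2 < s + x by linarith) hk)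
    calc ∑' n : ℕ, wzG (((n + (N + 1) : ℕ) : ℝ) + (s + x)) k
        ≤ ∑' n : ℕ, (1 + 1 / ((N : ℝ) + 1)) ^ 4 * ((1 - x) * wzG (((n + (N + 1) : ℕ) : ℝ) + s) k +
          x * wzG (((n + (N + 1) : ℕ) : ℝ) + (s + 1)) k) := by
          refine Summable.tsum_le_tsum (fun n => ?_) hsx
            (((hs0.mul_left _).add (hs1.mul_left _)).mul_left _)
          have ht : 0 < ((n + (N + 1) : ℕ) : ℝ) + s := by positivity
          have h := wzG_add_le ht hk hx0 hx1
          rw [add_assoc, add_assoc] at h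
          refine h.trans ?_
          have hnn0 := (wzG_pos ht.le hk).le
          have hnn1 := (wzG_pos (show 0 ≤ ((n + (N + 1) : ℕ) : ℝ) + (s + 1) by positivity) hk).le
          have := sub_nonneg.2 hx1
          have hle : (N : ℝ) + 1 ≤ ((n + (N + 1) : ℕ) : ℝ) + s := by
            push_cast
            have : (0 : ℝ) ≤ n := n.cast_nonneg
            linarith
          have hc : 1 / (((n + (N + 1) : ℕ) : ℝ) + s) ≤ 1 / ((N : ℝ) + 1) :=
            one_div_le_one_div_of_le (by positivity) hle
          refine mul_le_mul_of_nonneg_right (pow_le_pow_left₀ (by positivity) ?_ 4) (by positivity)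
          linarith
      _ = (1 + 1 / ((N : ℝ) + 1)) ^ 4 * ((1 - x) * ∑' n : ℕ, wzG (((n + (N + 1) : ℕ) : ℝ) + s) k +
          x * ∑' n : ℕ, wzG (((n + (N + 1) : ℕ) : ℝ) + (s + 1)) k) := by
          rw [tsum_mul_left, Summable.tsum_add (hs0.mul_left _) (hs1.mul_left _), tsum_mul_left,
            tsum_mul_left]
      _ ≤ _ := by
          have := sub_nonneg.2 hx1
          refine mul_le_mul_of_nonneg_left (add_le_add (mul_le_mul_of_nonneg_left ?_ this)
            (mul_le_mul_of_nonneg_left ?_ hx0)) (by positivity) <;> linarith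
  have hlim : Tendsto (fun N : ℕ => (1 + 1 / ((N : ℝ) + 1)) ^ 4 * wzLimit s) atTop
      (𝓝 ((1 + 0) ^ 4 * wzLimit s)) :=
    ((tendsto_one_div_add_atTop_nhds_zero_nat.const_add 1).pow 4).mul_const _
  have := ge_of_tendsto' hlim hN
  simpa using this

lemma wzLimit_eq {x : ℝ} (hx : -1 / 2 < x) (hx1 : x ≤ 1) : wzLimit x = wzLimit 0 := by
  have main : ∀ y : ℝ, 0 ≤ y → y ≤ 1 → wzLimit y = wzLimit 0 := by
    intro y hy0 hy1
    refine le_antisymm ?_ ?_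
    · simpa using wzLimit_add_le le_rfl hy0 hy1
    · have h1 := wzLimit_add_le hy0 (sub_nonneg.2 hy1) (show 1 - y ≤ 1 by linarith)
      have h2 := wzLimit_add_one (show -1 / 2 < (0 : ℝ) by norm_num)
      rw [zero_add] at h2
      rwa [add_sub_cancel, h2] at h1
  rcases le_or_gt 0 x with h | h
  · exact main x h hx1
  · rw [← wzLimit_add_one hx]
    exact main _ (by linarith) (by linarith)

/-- The rising factorial `(1/2)_n`. -/
noncomputable def halfPoch (n : ℕ) : ℝ := ∏ i ∈ Finset.range n, ((i : ℝ) + 1 / 2)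

lemma halfPoch_succ (n : ℕ) : halfPoch (n + 1) = halfPoch n * ((n : ℝ) + 1 / 2) :=
  Finset.prod_range_succ _ _

lemma halfPoch_pos (n : ℕ) : 0 < halfPoch n :=
  Finset.prod_pos fun i _ => by positivity

lemma halfPoch_le_factorial (n : ℕ) : halfPoch n ≤ n.factorial := by
  induction n with
  | zero => simp [halfPoch]
  | succ n ih =>
    rw [halfPoch_succ, Nat.factorial_succ]
    push_cast
    rw [mul_comm]
    have := halfPoch_pos n
    gcongr
    norm_num

lemma Gamma_nat_add_half_eq_halfPoch (n : ℕ) :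
    Real.Gamma ((n : ℝ) + 1 / 2) = √Real.pi * halfPoch n := by
  induction n with
  | zero => simpa [halfPoch] using Real.Gamma_one_half_eq
  | succ n ih =>
    rw [Nat.cast_succ, show (n : ℝ) + 1 + 1 / 2 = (n + 1 / 2) + 1 by ring,
      Real.Gamma_add_one (by positivity), ih, halfPoch_succ]
    ring

/-- The kernel of the WZ pair that evaluates the series at integers. -/
noncomputable def dualKernel (n k : ℕ) : ℝ :=
  (1 / 4) ^ n * halfPoch n ^ 3 * halfPoch k ^ 2 / (((n + k).factorial : ℝ) ^ 2 * n.factorial)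

lemma dualKernel_pos (n k : ℕ) : 0 < dualKernel n k := by
  have := halfPoch_pos n
  have := halfPoch_pos k
  unfold dualKernel
  positivity

lemma wz_dualKernel (n k : ℕ) :
    dualKernel n (k + 1) * (6 * (n : ℝ) + 4 * ((k + 1 : ℕ) : ℝ) + 1)
        - dualKernel n k * (6 * (n : ℝ) + 4 * (k : ℝ) + 1)
      = 8 * ((n + 1 : ℕ) : ℝ) * dualKernel (n + 1) k - 8 * (n : ℝ) * dualKernel n k := by
  unfold dualKernel
  rw [halfPoch_succ, halfPoch_succ, show n + 1 + k = n + k + 1 by ring, ← add_assoc,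
    Nat.factorial_succ, Nat.factorial_succ n, pow_succ]
  push_cast
  have h1 : ((n + k).factorial : ℝ) ≠ 0 := by positivity
  have h2 : (n.factorial : ℝ) ≠ 0 := by positivity
  have h3 : (n : ℝ) + k + 1 ≠ 0 := by positivity
  field_simp
  ring

lemma dualKernel_le (n k : ℕ) :
    dualKernel n k ≤ (1 / 4) ^ n * (1 / ((n + k).choose k : ℝ) ^ 2) := by
  have hn := halfPoch_pos n
  have hk := halfPoch_pos k
  have hc : ((n + k).factorial : ℝ) = (n + k).choose k * n.factorial * k.factorial := by
    have := Nat.add_choose_mul_factorial_mul_factorial n k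
    exact_mod_cast this.symm
  have hcpos : (0 : ℝ) < (n + k).choose k := by
    exact_mod_cast Nat.choose_pos (Nat.le_add_left k n)
  unfold dualKernel
  rw [hc, mul_assoc, mul_div_assoc]
  refine mul_le_mul_of_nonneg_left ?_ (by positivity)
  rw [div_le_div_iff₀ (by positivity) (by positivity)]
  calc _ ≤ ((n.factorial : ℝ) ^ 3 * (k.factorial : ℝ) ^ 2) * ((n + k).choose k : ℝ) ^ 2 := by
        gcongr
        · exact halfPoch_le_factorial n
        · exact halfPoch_le_factorial k
    _ = _ := by ring

lemma dualKernel_le_geometric (n k : ℕ) : dualKernel n k ≤ (1 / 4) ^ n := by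
  refine (dualKernel_le n k).trans ?_
  have hcpos : (1 : ℝ) ≤ (n + k).choose k := by
    exact_mod_cast Nat.choose_pos (Nat.le_add_left k n)
  refine mul_le_of_le_one_right (by positivity) ?_
  rw [div_le_one (by positivity)]
  nlinarith

lemma summable_natCast_mul_quarter_pow : Summable fun n : ℕ => (n : ℝ) * (1 / 4) ^ n := by
  simpa using summable_pow_mul_geometric_of_norm_lt_one 1 (r := (1 / 4 : ℝ)) (by norm_num)

lemma summable_quarter_pow_mul (c : ℝ) :
    Summable fun n : ℕ => (1 / 4 : ℝ) ^ n * (6 * (n : ℝ) + c) := by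
  have h1 := (summable_natCast_mul_quarter_pow.mul_left 6).add
    ((summable_geometric_of_lt_one (by norm_num) (show (1 / 4 : ℝ) < 1 by norm_num)).mul_left c)
  refine h1.congr fun n => ?_
  ring

lemma summable_dual (k : ℕ) :
    Summable fun n : ℕ => dualKernel n k * (6 * (n : ℝ) + 4 * (k : ℝ) + 1) := by
  refine Summable.of_nonneg_of_le (fun n => ?_) (fun n => ?_)
    (summable_quarter_pow_mul (4 * k + 1))
  · have := dualKernel_pos n k
    positivity
  · rw [← add_assoc]
    gcongr
    exact dualKernel_le_geometric n k

lemma tsum_dual_succ (k : ℕ) :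
    ∑' n : ℕ, dualKernel n (k + 1) * (6 * (n : ℝ) + 4 * ((k + 1 : ℕ) : ℝ) + 1)
      = ∑' n : ℕ, dualKernel n k * (6 * (n : ℝ) + 4 * (k : ℝ) + 1) := by
  have h1 := ((summable_dual (k + 1)).hasSum.sub (summable_dual k).hasSum).tendsto_sum_nat
  have h2 : ∀ N : ℕ, ∑ n ∈ Finset.range N,
      (dualKernel n (k + 1) * (6 * (n : ℝ) + 4 * ((k + 1 : ℕ) : ℝ) + 1)
        - dualKernel n k * (6 * (n : ℝ) + 4 * (k : ℝ) + 1)) = 8 * (N : ℝ) * dualKernel N k := by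
    intro N
    induction N with
    | zero => simp
    | succ N ih => rw [Finset.sum_range_succ, ih, wz_dualKernel]; ring
  simp only [h2] at h1
  have h3 : Tendsto (fun N : ℕ => 8 * (N : ℝ) * dualKernel N k) atTop (𝓝 0) := by
    have h4 := (summable_natCast_mul_quarter_pow.mul_left 8).tendsto_atTop_zero
    refine squeeze_zero (fun N => ?_) (fun N => ?_) h4
    · have := dualKernel_pos N k
      positivity
    · rw [mul_assoc]
      gcongr
      exact dualKernel_le_geometric N k
  have := tendsto_nhds_unique h1 h3
  linarith

lemma wallis_mul_halfPoch (k : ℕ) :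
    Real.Wallis.W k * ((halfPoch k / k.factorial) ^ 2 * (2 * k + 1)) = 1 := by
  induction k with
  | zero => simp [Real.Wallis.W, halfPoch]
  | succ k ih =>
    rw [Real.Wallis.W_succ, halfPoch_succ, Nat.factorial_succ]
    push_cast
    calc _ = Real.Wallis.W k * ((halfPoch k / k.factorial) ^ 2 * (2 * k + 1)) := by
          field_simp
          ring
      _ = 1 := ih

lemma tendsto_dual_zero :
    Tendsto (fun k : ℕ => dualKernel 0 k * (6 * ((0 : ℕ) : ℝ) + 4 * (k : ℝ) + 1)) atTop
      (𝓝 (4 / Real.pi)) := by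
  have h1 := (Real.Wallis.tendsto_W_nhds_pi_div_two.inv₀ (by positivity)).mul
    ((tendsto_natCast_add_div (1 / 4) (1 / 2)).const_mul 2)
  have h2 : (Real.pi / 2)⁻¹ * (2 * 1) = 4 / Real.pi := by
    field_simp
    norm_num
  rw [h2] at h1
  refine h1.congr fun k => ?_
  have h3 := wallis_mul_halfPoch k
  have h4 : (Real.Wallis.W k)⁻¹ = (halfPoch k / k.factorial) ^ 2 * (2 * k + 1) := by
    exact inv_eq_of_mul_eq_one_right h3
  rw [h4]
  unfold dualKernel
  simp only [zero_add, halfPoch, Finset.range_zero, Finset.prod_empty, Nat.factorial_zero,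
    Nat.cast_zero, Nat.cast_one]
  field_simp
  ring_nf

lemma tsum_dual_zero :
    ∑' n : ℕ, dualKernel n 0 * (6 * (n : ℝ) + 4 * ((0 : ℕ) : ℝ) + 1) = 4 / Real.pi := by
  have hconst : ∀ k : ℕ, ∑' n : ℕ, dualKernel n k * (6 * (n : ℝ) + 4 * (k : ℝ) + 1)
      = ∑' n : ℕ, dualKernel n 0 * (6 * (n : ℝ) + 4 * ((0 : ℕ) : ℝ) + 1) := by
    intro k
    induction k with
    | zero => rfl
    | succ k ih => rw [tsum_dual_succ, ih]
  set C := ∑' n : ℕ, (1 / 4 : ℝ) ^ (n + 1) * (6 * ((n + 1 : ℕ) : ℝ) + 4) with hC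
  have hCs : Summable fun n : ℕ => (1 / 4 : ℝ) ^ (n + 1) * (6 * ((n + 1 : ℕ) : ℝ) + 4) :=
    (summable_nat_add_iff 1).2 (summable_quarter_pow_mul 4)
  have htail : Tendsto (fun k : ℕ => ∑' n : ℕ, dualKernel (n + 1) k *
      (6 * ((n + 1 : ℕ) : ℝ) + 4 * (k : ℝ) + 1)) atTop (𝓝 0) := by
    have hz : Tendsto (fun k : ℕ => 1 / ((k : ℝ) + 1) * C) atTop (𝓝 (0 * C)) :=
      tendsto_one_div_add_atTop_nhds_zero_nat.mul_const C
    rw [zero_mul] at hz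
    refine squeeze_zero (fun k => tsum_nonneg fun n => ?_) (fun k => ?_) hz
    · have := dualKernel_pos (n + 1) k
      positivity
    · rw [hC, ← tsum_mul_left]
      refine Summable.tsum_le_tsum (fun n => ?_) ((summable_nat_add_iff 1).2 (summable_dual k))
        (hCs.mul_left _)
      have hch : (k : ℝ) + 1 ≤ (n + 1 + k).choose k := by
        have : k + 1 ≤ (n + 1 + k).choose k := by
          calc k + 1 = (k + 1).choose k := by simp
            _ ≤ _ := Nat.choose_le_choose k (by omega)
        exact_mod_cast this
      have h1 : dualKernel (n + 1) k ≤ (1 / 4) ^ (n + 1) * (1 / ((k : ℝ) + 1) ^ 2) :=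
        (dualKernel_le _ _).trans (by gcongr)
      have h2 : 6 * ((n + 1 : ℕ) : ℝ) + 4 * (k : ℝ) + 1
          ≤ (6 * ((n + 1 : ℕ) : ℝ) + 4) * ((k : ℝ) + 1) := by
        push_cast
        nlinarith [(n.cast_nonneg : (0 : ℝ) ≤ n), (k.cast_nonneg : (0 : ℝ) ≤ k),
          mul_nonneg (n.cast_nonneg : (0 : ℝ) ≤ n) (k.cast_nonneg : (0 : ℝ) ≤ k)]
      calc _ ≤ ((1 / 4) ^ (n + 1) * (1 / ((k : ℝ) + 1) ^ 2)) *
            ((6 * ((n + 1 : ℕ) : ℝ) + 4) * ((k : ℝ) + 1)) := by gcongr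
        _ = _ := by field_simp
  have hsum := tendsto_dual_zero.add htail
  rw [add_zero] at hsum
  refine tendsto_nhds_unique (tendsto_const_nhds.congr fun k => ?_) hsum
  rw [← hconst k, (summable_dual k).tsum_eq_zero_add]

lemma wzLimit_zero : wzLimit 0 = 4 / Real.pi := by
  unfold wzLimit
  rw [← tsum_dual_zero]
  have h1 : ∑' k : ℕ, wzF 0 k = 0 := by simp [wzF]
  rw [h1, sub_zero]
  refine tsum_congr fun n => ?_
  unfold wzG wzKernel dualKernel
  have hpi := Real.pi_pos
  have h2 : Real.Gamma (1 / 2) = √Real.pi := Real.Gamma_one_half_eq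
  have h3 : (2 : ℝ) ^ (-(2 : ℝ) * n) = (1 / 4) ^ n := by
    rw [Real.rpow_mul two_pos.le, Real.rpow_natCast, Real.rpow_neg two_pos.le]
    norm_num
  have h4 : √Real.pi ≠ 0 := by positivity
  simp only [add_zero, zero_add, Gamma_nat_add_half_eq_halfPoch, Real.Gamma_nat_eq_factorial, h2, h3]
  simp only [halfPoch, Finset.range_zero, Finset.prod_empty, Nat.cast_zero]
  field_simp
  ring_nf

theorem tsum_wzG_eq {x : ℝ} (hx : -1 / 2 < x) (hx1 : x ≤ 1) :
    ∑' n : ℕ, wzG (n + x) 0 = 4 / Real.pi + ∑' k : ℕ, wzF x k := by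
  have h := wzLimit_eq hx hx1
  rw [wzLimit_zero, wzLimit] at h
  linarith

open Set

lemma summable_linear_mul_pow {r : ℝ} (hr0 : 0 ≤ r) (hr : r < 1) :
    Summable fun k : ℕ => ((k : ℝ) + 1) ^ 2 * r ^ k := by
  have hn : ‖r‖ < 1 := by rwa [Real.norm_of_nonneg hr0]
  have h := ((summable_pow_mul_geometric_of_norm_lt_one 2 hn).add
    ((summable_pow_mul_geometric_of_norm_lt_one 1 hn).mul_left 2)).add
    (summable_pow_mul_geometric_of_norm_lt_one 0 hn)
  refine h.congr fun k => ?_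
  ring

lemma summable_coeff_mul_pow {c : ℕ → ℝ} {C : ℝ} (hc : ∀ k : ℕ, |c k| ≤ C * ((k : ℝ) + 1) ^ 2)
    {w : ℝ} (hw : |w| < 1) : Summable fun k : ℕ => c k * w ^ k := by
  refine Summable.of_norm_bounded ((summable_linear_mul_pow (abs_nonneg w) hw).mul_left C)
    fun k => ?_
  rw [norm_mul, norm_pow, Real.norm_eq_abs, Real.norm_eq_abs, ← mul_assoc]
  exact mul_le_mul_of_nonneg_right (hc k) (by positivity)

lemma hasDerivAt_tsum_mul_pow {c : ℕ → ℝ} {C : ℝ} (hc : ∀ k : ℕ, |c k| ≤ C * ((k : ℝ) + 1))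
    {w : ℝ} (hw : |w| < 1) :
    HasDerivAt (fun w : ℝ => ∑' k : ℕ, c k * w ^ k)
      (∑' k : ℕ, ((k : ℝ) + 1) * c (k + 1) * w ^ k) w := by
  have hC : 0 ≤ C := by simpa using (abs_nonneg _).trans (hc 0)
  obtain ⟨r, hwr, hr⟩ := exists_between hw
  have hr0 : 0 ≤ r := (abs_nonneg w).trans hwr.le
  have hbound : ∀ (k : ℕ) (y : ℝ), y ∈ Metric.ball (0 : ℝ) r →
      ‖c k * ((k : ℝ) * y ^ (k - 1))‖ ≤ C * (((k : ℝ) + 1) * ((k : ℝ) * r ^ (k - 1))) := by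
    intro k y hy
    rw [mem_ball_zero_iff] at hy
    rw [norm_mul, norm_mul, norm_pow, Real.norm_natCast, Real.norm_eq_abs, ← mul_assoc C]
    exact mul_le_mul (hc k) (by gcongr) (by positivity) (by positivity)
  have hsum : Summable fun k : ℕ => C * (((k : ℝ) + 1) * ((k : ℝ) * r ^ (k - 1))) := by
    refine Summable.mul_left C ((summable_nat_add_iff 1).1 ?_)
    refine Summable.of_nonneg_of_le (fun k => by positivity) (fun k => ?_)
      ((summable_linear_mul_pow hr0 hr).mul_left 2)
    rw [Nat.add_sub_cancel, ← mul_assoc, ← mul_assoc]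
    refine mul_le_mul_of_nonneg_right ?_ (by positivity)
    push_cast
    nlinarith [(k.cast_nonneg : (0 : ℝ) ≤ k)]
  have hmem : w ∈ Metric.ball (0 : ℝ) r := by rwa [mem_ball_zero_iff]
  have h := hasDerivAt_tsum_of_isPreconnected hsum Metric.isOpen_ball
    (convex_ball (0 : ℝ) r).isPreconnected
    (g := fun k y => c k * y ^ k) (g' := fun k y => c k * ((k : ℝ) * y ^ (k - 1)))
    (fun k y _ => (hasDerivAt_pow k y).const_mul (c k)) hbound hmem ?_ hmem
  · refine h.congr_deriv ?_
    rw [(Summable.of_norm_bounded hsum fun k => hbound k w hmem).tsum_eq_zero_add]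
    simp only [Nat.cast_zero, zero_mul, mul_zero, zero_add, Nat.add_sub_cancel]
    refine tsum_congr fun k => ?_
    push_cast
    ring
  · refine summable_coeff_mul_pow (C := C) (fun k => (hc k).trans ?_) hw
    gcongr
    nlinarith [(k.cast_nonneg : (0 : ℝ) ≤ k)]

lemma hasDerivAt_tsum_odd {c : ℕ → ℝ} {C : ℝ} (hc : ∀ k : ℕ, |c k| ≤ C * ((k : ℝ) + 1))
    {z : ℝ} (hz : |z| < 1) :
    HasDerivAt (fun z : ℝ => ∑' k : ℕ, c k * (z ^ (2 * k + 1) / (2 * (k : ℝ) + 1)))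
      (∑' k : ℕ, c k * (z ^ 2) ^ k) z := by
  have hC : 0 ≤ C := by simpa using (abs_nonneg _).trans (hc 0)
  obtain ⟨r, hzr, hr⟩ := exists_between hz
  have hr0 : 0 ≤ r := (abs_nonneg z).trans hzr.le
  have hbound : ∀ (k : ℕ) (y : ℝ), y ∈ Metric.ball (0 : ℝ) r →
      ‖c k * (y ^ 2) ^ k‖ ≤ C * (((k : ℝ) + 1) ^ 2 * (r ^ 2) ^ k) := by
    intro k y hy
    rw [mem_ball_zero_iff] at hy
    rw [norm_mul, norm_pow, norm_pow, Real.norm_eq_abs (c k), ← mul_assoc C]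
    refine mul_le_mul ((hc k).trans ?_) (by gcongr) (by positivity) (by positivity)
    gcongr
    nlinarith [(k.cast_nonneg : (0 : ℝ) ≤ k)]
  have hsum : Summable fun k : ℕ => C * (((k : ℝ) + 1) ^ 2 * (r ^ 2) ^ k) :=
    (summable_linear_mul_pow (sq_nonneg r) (by nlinarith)).mul_left C
  have hmem : z ∈ Metric.ball (0 : ℝ) r := by rwa [mem_ball_zero_iff]
  have h0 : (0 : ℝ) ∈ Metric.ball (0 : ℝ) r := by
    rw [mem_ball_zero_iff, norm_zero]; exact (abs_nonneg z).trans_lt hzr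
  refine hasDerivAt_tsum_of_isPreconnected hsum Metric.isOpen_ball
    (convex_ball (0 : ℝ) r).isPreconnected
    (g := fun k y => c k * (y ^ (2 * k + 1) / (2 * (k : ℝ) + 1)))
    (g' := fun k y => c k * (y ^ 2) ^ k) (fun k y _ => ?_) hbound h0 ?_ hmem
  · have h := ((hasDerivAt_pow (2 * k + 1) y).div_const (2 * (k : ℝ) + 1)).const_mul (c k)
    refine h.congr_deriv ?_
    have : 2 * (k : ℝ) + 1 ≠ 0 := by positivity
    rw [Nat.add_sub_cancel, pow_mul]
    push_cast
    field_simp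
  · simp [summable_zero]

/-- The normalized central binomial coefficient `(1/2)_k / k!`. -/
noncomputable def centralCoeff (k : ℕ) : ℝ := halfPoch k / k.factorial

lemma centralCoeff_succ (k : ℕ) :
    ((k : ℝ) + 1) * centralCoeff (k + 1) = ((k : ℝ) + 1 / 2) * centralCoeff k := by
  unfold centralCoeff
  rw [halfPoch_succ, Nat.factorial_succ]
  push_cast
  field_simp

lemma centralCoeff_pos (k : ℕ) : 0 < centralCoeff k := by
  have := halfPoch_pos k
  unfold centralCoeff
  positivity

lemma centralCoeff_le_one (k : ℕ) : centralCoeff k ≤ 1 := by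
  unfold centralCoeff
  rw [div_le_one (by positivity)]
  exact halfPoch_le_factorial k

lemma abs_centralCoeff_mul_le {c C : ℝ} (k : ℕ) (hc : |c| ≤ C) : |centralCoeff k * c| ≤ C := by
  rw [abs_mul, abs_of_pos (centralCoeff_pos k)]
  exact (mul_le_of_le_one_left (abs_nonneg c) (centralCoeff_le_one k)).trans hc

lemma sin_sq_abs_lt_one {t : ℝ} (ht : t ∈ Ioo (-(Real.pi / 2)) (Real.pi / 2)) :
    |Real.sin t ^ 2| < 1 ∧ |Real.sin t| < 1 := by
  have h1 := Real.cos_pos_of_mem_Ioo ht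
  have h2 := Real.sin_sq_add_cos_sq t
  have h3 : Real.sin t ^ 2 < 1 := by nlinarith
  exact ⟨by rwa [abs_of_nonneg (sq_nonneg _)], by rwa [← sq_lt_one_iff_abs_lt_one]⟩

lemma hasDerivAt_cos_mul_tsum {c : ℕ → ℝ} {C : ℝ} (hc : ∀ k : ℕ, |c k| ≤ C * ((k : ℝ) + 1))
    {t : ℝ} (ht : t ∈ Ioo (-(Real.pi / 2)) (Real.pi / 2)) :
    HasDerivAt (fun t => Real.cos t * ∑' k : ℕ, (centralCoeff k * c k) * (Real.sin t ^ 2) ^ k)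
      (2 * Real.sin t * ∑' k : ℕ, (((k : ℝ) + 1 / 2) * centralCoeff k * (c (k + 1) - c k)) *
        (Real.sin t ^ 2) ^ k) t := by
  obtain ⟨hw, -⟩ := sin_sq_abs_lt_one ht
  have hC : 0 ≤ C := by simpa using (abs_nonneg _).trans (hc 0)
  have hac : ∀ k : ℕ, |centralCoeff k * c k| ≤ C * ((k : ℝ) + 1) :=
    fun k => abs_centralCoeff_mul_le k (hc k)
  set w := Real.sin t ^ 2 with hwdef
  have hf := hasDerivAt_tsum_mul_pow hac hw
  have hd := (Real.hasDerivAt_cos t).mul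
    (hf.comp t ((Real.hasDerivAt_sin t).pow 2))
  refine HasDerivAt.congr_deriv hd ?_
  have hs0 : Summable fun k : ℕ => (centralCoeff k * c k) * w ^ k := by
    refine summable_coeff_mul_pow (C := C) (fun k => (hac k).trans ?_) hw
    gcongr
    nlinarith [(k.cast_nonneg : (0 : ℝ) ≤ k)]
  have hs1 : Summable fun k : ℕ => ((k : ℝ) * (centralCoeff k * c k)) * w ^ k := by
    refine summable_coeff_mul_pow (C := C) (fun k => ?_) hw
    rw [abs_mul, Nat.abs_cast]
    have := hac k
    have hk : (0 : ℝ) ≤ k := k.cast_nonneg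
    calc (k : ℝ) * |centralCoeff k * c k| ≤ ((k : ℝ) + 1) * (C * ((k : ℝ) + 1)) := by
          gcongr; linarith
      _ = _ := by ring
  have hs2 : Summable fun k : ℕ =>
      (((k : ℝ) + 1) * (centralCoeff (k + 1) * c (k + 1))) * w ^ k := by
    refine summable_coeff_mul_pow (C := 2 * C) (fun k => ?_) hw
    have hk : (0 : ℝ) ≤ k := k.cast_nonneg
    rw [abs_mul, abs_of_nonneg (by positivity : (0 : ℝ) ≤ (k : ℝ) + 1)]
    have := hac (k + 1)
    push_cast at this
    calc ((k : ℝ) + 1) * |centralCoeff (k + 1) * c (k + 1)|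
        ≤ ((k : ℝ) + 1) * (C * ((k : ℝ) + 1 + 1)) := by gcongr
      _ ≤ ((k : ℝ) + 1) * (C * (2 * ((k : ℝ) + 1))) := by gcongr; linarith
      _ = _ := by ring
  have hshift : ∑' k : ℕ, ((k : ℝ) * (centralCoeff k * c k)) * w ^ k
      = w * ∑' k : ℕ, (((k : ℝ) + 1) * (centralCoeff (k + 1) * c (k + 1))) * w ^ k := by
    rw [hs1.tsum_eq_zero_add, ← tsum_mul_left]
    simp only [Nat.cast_zero, zero_mul, zero_add]
    refine tsum_congr fun k => ?_
    push_cast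
    ring
  have hD : ∑' k : ℕ, (((k : ℝ) + 1 / 2) * centralCoeff k * (c (k + 1) - c k)) * w ^ k
      = ∑' k : ℕ, (((k : ℝ) + 1) * (centralCoeff (k + 1) * c (k + 1))) * w ^ k
        - ∑' k : ℕ, ((k : ℝ) * (centralCoeff k * c k)) * w ^ k
        - 1 / 2 * ∑' k : ℕ, (centralCoeff k * c k) * w ^ k := by
    rw [← tsum_mul_left, ← hs2.tsum_sub hs1, ← (hs2.sub hs1).tsum_sub (hs0.mul_left _)]
    refine tsum_congr fun k => ?_
    rw [← mul_assoc ((k : ℝ) + 1), centralCoeff_succ]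
    ring
  rw [hD, hshift]
  simp only [Function.comp_apply, Pi.pow_apply, ← hwdef]
  have hcos : Real.cos t * Real.cos t = 1 - w := by
    rw [hwdef]; nlinarith [Real.sin_sq_add_cos_sq t]
  simp only [Nat.cast_ofNat]
  linear_combination (2 * Real.sin t *
    ∑' k : ℕ, (((k : ℝ) + 1) * (centralCoeff (k + 1) * c (k + 1))) * w ^ k) * hcos

lemma cos_mul_tsum_centralCoeff {t : ℝ} (ht : t ∈ Ioo (-(Real.pi / 2)) (Real.pi / 2)) :
    Real.cos t * ∑' k : ℕ, centralCoeff k * (Real.sin t ^ 2) ^ k = 1 := by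
  have hd : ∀ s ∈ Ioo (-(Real.pi / 2)) (Real.pi / 2), HasDerivAt
      (fun t => Real.cos t * ∑' k : ℕ, centralCoeff k * (Real.sin t ^ 2) ^ k) 0 s := by
    intro s hs
    have := hasDerivAt_cos_mul_tsum (c := fun _ => 1) (C := 1)
      (fun k => by simp [(k.cast_nonneg : (0 : ℝ) ≤ k)]) hs
    simpa using this
  have h0 : (0 : ℝ) ∈ Ioo (-(Real.pi / 2)) (Real.pi / 2) := by
    constructor <;> linarith [Real.pi_pos]
  have := isOpen_Ioo.is_const_of_deriv_eq_zero isPreconnected_Ioo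
    (fun s hs => (hd s hs).differentiableAt.differentiableWithinAt)
    (fun s hs => (hd s hs).deriv) ht h0
  rw [this, tsum_eq_single 0 (fun k hk => by simp [hk])]
  simp [centralCoeff, halfPoch]

/-- The harmonic-type coefficients produced by differentiating the kernel. -/
noncomputable def harmonicCoeff (k : ℕ) : ℝ :=
  ∑ j ∈ Finset.range k, (3 / ((j : ℝ) + 1 / 2) - 1 / ((j : ℝ) + 1))

lemma abs_harmonicCoeff_le (k : ℕ) : |harmonicCoeff k| ≤ 6 * ((k : ℝ) + 1) := by
  have h : |harmonicCoeff k| ≤ ∑ j ∈ Finset.range k, (6 : ℝ) := by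
    refine (Finset.abs_sum_le_sum_abs _ _).trans (Finset.sum_le_sum fun j _ => ?_)
    have hj : (0 : ℝ) ≤ j := j.cast_nonneg
    have h1 : 3 / ((j : ℝ) + 1 / 2) ≤ 6 := by
      rw [div_le_iff₀ (by positivity)]; linarith
    have h2 : 1 / ((j : ℝ) + 1) ≤ 3 / ((j : ℝ) + 1 / 2) := by
      rw [div_le_div_iff₀ (by positivity) (by positivity)]; linarith
    have h3 : 0 ≤ 1 / ((j : ℝ) + 1) := by positivity
    rw [abs_of_nonneg (by linarith)]
    linarith
  refine h.trans ?_
  simp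
  linarith

lemma cos_mul_tsum_harmonicCoeff {t : ℝ} (ht : t ∈ Ioo (-(Real.pi / 2)) (Real.pi / 2)) :
    Real.cos t * ∑' k : ℕ, (centralCoeff k * harmonicCoeff k) * (Real.sin t ^ 2) ^ k
      = -4 * Real.log (Real.cos t) - 4 * Real.log (Real.cos (t / 2)) := by
  have hd := fun (s : ℝ) (hs : s ∈ Ioo (-(Real.pi / 2)) (Real.pi / 2)) =>
    hasDerivAt_cos_mul_tsum abs_harmonicCoeff_le hs
  have hcos2 : ∀ s ∈ Ioo (-(Real.pi / 2)) (Real.pi / 2), 0 < Real.cos (s / 2) := fun s hs =>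
    Real.cos_pos_of_mem_Ioo ⟨by linarith [hs.1, Real.pi_pos], by linarith [hs.2, Real.pi_pos]⟩
  have hg : ∀ s ∈ Ioo (-(Real.pi / 2)) (Real.pi / 2), HasDerivAt
      (fun t => -4 * Real.log (Real.cos t) - 4 * Real.log (Real.cos (t / 2)))
      (-4 * (-Real.sin s / Real.cos s) -
        4 * (-Real.sin (s / 2) * (1 / 2) / Real.cos (s / 2))) s := by
    intro s hs
    have h1 := (Real.hasDerivAt_cos s).log (Real.cos_pos_of_mem_Ioo hs).ne'
    have h2 := (((hasDerivAt_id s).div_const 2).cos).log (hcos2 s hs).ne'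
    simp only [id] at h2
    exact (h1.const_mul (-4)).sub (h2.const_mul 4)
  have h0 : (0 : ℝ) ∈ Ioo (-(Real.pi / 2)) (Real.pi / 2) := by
    constructor <;> linarith [Real.pi_pos]
  refine isOpen_Ioo.eqOn_of_deriv_eq isPreconnected_Ioo
    (fun s hs => (hd s hs).differentiableAt.differentiableWithinAt)
    (fun s hs => (hg s hs).differentiableAt.differentiableWithinAt) (fun s hs => ?_) h0 ?_ ht
  · rw [(hd s hs).deriv, (hg s hs).deriv]
    obtain ⟨hw, -⟩ := sin_sq_abs_lt_one hs
    have hA := cos_mul_tsum_centralCoeff hs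
    have hc := Real.cos_pos_of_mem_Ioo hs
    have hc2 := hcos2 s hs
    set w := Real.sin s ^ 2 with hwdef
    have hsA : Summable fun k : ℕ => centralCoeff k * w ^ k := by
      refine summable_coeff_mul_pow (C := 1) (fun k => ?_) hw
      rw [abs_of_pos (centralCoeff_pos k)]
      nlinarith [centralCoeff_le_one k, (k.cast_nonneg : (0 : ℝ) ≤ k)]
    have hsB : Summable fun k : ℕ => centralCoeff (k + 1) * w ^ k := by
      refine summable_coeff_mul_pow (C := 1) (fun k => ?_) hw
      rw [abs_of_pos (centralCoeff_pos (k + 1))]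
      nlinarith [centralCoeff_le_one (k + 1), (k.cast_nonneg : (0 : ℝ) ≤ k)]
    have hB : w * ∑' k : ℕ, centralCoeff (k + 1) * w ^ k
        = ∑' k : ℕ, centralCoeff k * w ^ k - 1 := by
      rw [hsA.tsum_eq_zero_add, ← tsum_mul_left]
      have : centralCoeff 0 * w ^ 0 = 1 := by simp [centralCoeff, halfPoch]
      rw [this, add_sub_cancel_left]
      refine tsum_congr fun k => ?_
      ring
    have hD : ∑' k : ℕ, (((k : ℝ) + 1 / 2) * centralCoeff k *
        (harmonicCoeff (k + 1) - harmonicCoeff k)) * w ^ k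
        = 3 * ∑' k : ℕ, centralCoeff k * w ^ k - ∑' k : ℕ, centralCoeff (k + 1) * w ^ k := by
      rw [← tsum_mul_left, ← (hsA.mul_left 3).tsum_sub hsB]
      refine tsum_congr fun k => ?_
      have h1 : harmonicCoeff (k + 1) - harmonicCoeff k
          = 3 / ((k : ℝ) + 1 / 2) - 1 / ((k : ℝ) + 1) := by
        unfold harmonicCoeff
        rw [Finset.sum_range_succ]
        ring
      have h2 : centralCoeff (k + 1) = ((k : ℝ) + 1 / 2) * centralCoeff k / ((k : ℝ) + 1) := by
        rw [← centralCoeff_succ]; field_simp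
      rw [h1, h2]
      field_simp
    rw [hD]
    set A := ∑' k : ℕ, centralCoeff k * w ^ k
    set B := ∑' k : ℕ, centralCoeff (k + 1) * w ^ k
    have hA' : A = 1 / Real.cos s := by rw [← hA]; field_simp
    have hsin : Real.sin s = 2 * Real.sin (s / 2) * Real.cos (s / 2) := by
      rw [← Real.sin_two_mul]; ring_nf
    have hcs : Real.cos s = 2 * Real.cos (s / 2) ^ 2 - 1 := by
      rw [← Real.cos_two_mul]; ring_nf
    have hsc := Real.sin_sq_add_cos_sq (s / 2)
    rcases eq_or_ne (Real.sin s) 0 with hz | hz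
    · have hz2 : Real.sin (s / 2) = 0 := by
        rw [hsin] at hz
        rcases mul_eq_zero.1 hz with h | h
        · linarith
        · exact absurd h hc2.ne'
      rw [hz, hz2]; simp
    · have hB' : Real.sin s * B = (1 / Real.cos s - 1) / Real.sin s := by
        rw [← hA', ← hB, hwdef]; field_simp
      have hz2 : Real.sin (s / 2) ≠ 0 := fun h => hz (by rw [hsin, h]; ring)
      have hkey : (1 / Real.cos s - 1) / Real.sin s
          = Real.sin (s / 2) / (Real.cos s * Real.cos (s / 2)) := by
        rw [hsin]
        field_simp
        rw [hcs]
        linear_combination (-2) * hsc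
      have hkey2 : Real.sin s / Real.cos s - Real.sin (s / 2) / Real.cos (s / 2)
          = Real.sin (s / 2) / (Real.cos s * Real.cos (s / 2)) := by
        rw [hsin]
        field_simp
        rw [hcs]
        ring
      rw [mul_sub, mul_assoc 2 (Real.sin s) B, hB', hkey, ← hkey2, hA']
      ring
  · simp only [Real.sin_zero, Real.cos_zero, zero_div, Real.log_one]
    rw [tsum_eq_single 0 (fun k hk => by simp [hk])]
    simp [harmonicCoeff]

/-- The integral of `log ∘ sin` over `[0, a]`. -/
noncomputable def logSinInt (a : ℝ) : ℝ := ∫ t in (0 : ℝ)..a, Real.log (Real.sin t)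

/-- The integral of `log ∘ cos` over `[0, a]`. -/
noncomputable def logCosInt (a : ℝ) : ℝ := ∫ t in (0 : ℝ)..a, Real.log (Real.cos t)

lemma intervalIntegrable_log_sin_apply (a b : ℝ) :
    IntervalIntegrable (fun t => Real.log (Real.sin t)) MeasureTheory.volume a b :=
  intervalIntegrable_log_sin

lemma intervalIntegrable_log_cos_apply (a b : ℝ) :
    IntervalIntegrable (fun t => Real.log (Real.cos t)) MeasureTheory.volume a b :=
  intervalIntegrable_log_cos

lemma integral_log_sin_eq_sub (a b : ℝ) :
    ∫ t in a..b, Real.log (Real.sin t) = logSinInt b - logSinInt a := by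
  unfold logSinInt
  rw [intervalIntegral.integral_interval_sub_left (intervalIntegrable_log_sin_apply _ _)
    (intervalIntegrable_log_sin_apply _ _)]

lemma logSinInt_pi_div_two : logSinInt (Real.pi / 2) = -(Real.pi / 2 * Real.log 2) := by
  unfold logSinInt
  rw [integral_log_sin_zero_pi_div_two]
  ring

lemma logCosInt_eq (a : ℝ) :
    logCosInt a = logSinInt (Real.pi / 2) - logSinInt (Real.pi / 2 - a) := by
  have h := intervalIntegral.integral_comp_sub_left (a := 0) (b := a)
    (fun t => Real.log (Real.sin t)) (Real.pi / 2)
  simp only [Real.sin_pi_div_two_sub, sub_zero] at h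
  rw [logCosInt, h, integral_log_sin_eq_sub]

lemma logSinInt_two_mul {a : ℝ} (ha : 0 ≤ a) (ha2 : a ≤ Real.pi / 2) :
    logSinInt (2 * a) = 2 * a * Real.log 2 + 2 * logSinInt a + 2 * logCosInt a := by
  have h := intervalIntegral.mul_integral_comp_mul_left (a := 0) (b := a)
    (f := fun t => Real.log (Real.sin t)) 2
  rw [mul_zero] at h
  have hcongr : ∫ t in (0 : ℝ)..a, Real.log (Real.sin (2 * t))
      = ∫ t in (0 : ℝ)..a, (Real.log 2 + Real.log (Real.sin t) + Real.log (Real.cos t)) := by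
    refine intervalIntegral.integral_congr_Ioo_of_le ha fun t ht => ?_
    have hs : 0 < Real.sin t := Real.sin_pos_of_pos_of_lt_pi ht.1
      (by linarith [ht.2, Real.pi_pos])
    have hc : 0 < Real.cos t := Real.cos_pos_of_mem_Ioo
      ⟨by linarith [ht.1, Real.pi_pos], by linarith [ht.2]⟩
    simp only [Real.sin_two_mul]
    rw [Real.log_mul (by positivity) hc.ne', Real.log_mul two_ne_zero hs.ne']
  rw [logSinInt, ← h, hcongr, intervalIntegral.integral_add
    (intervalIntegrable_const.add (intervalIntegrable_log_sin_apply _ _))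
    (intervalIntegrable_log_cos_apply _ _), intervalIntegral.integral_add
    intervalIntegrable_const (intervalIntegrable_log_sin_apply _ _),
    intervalIntegral.integral_const, ← logSinInt, ← logCosInt, smul_eq_mul]
  ring

lemma sin_three_mul_eq_prod (t : ℝ) : Real.sin (3 * t)
    = 4 * Real.sin t * Real.sin (Real.pi / 3 - t) * Real.sin (Real.pi / 3 + t) := by
  rw [Real.sin_three_mul, Real.sin_sub, Real.sin_add, Real.sin_pi_div_three,
    Real.cos_pi_div_three]
  have h3 : √(3 : ℝ) ^ 2 = 3 := Real.sq_sqrt (by norm_num)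
  have h := Real.sin_sq_add_cos_sq t
  linear_combination (-Real.sin t * Real.cos t ^ 2) * h3 - 3 * Real.sin t * h

lemma logSinInt_three_mul {a : ℝ} (ha : 0 ≤ a) (ha2 : a ≤ Real.pi / 3) :
    logSinInt (3 * a) = 3 * (2 * a * Real.log 2 + logSinInt a
      + logSinInt (Real.pi / 3 + a) - logSinInt (Real.pi / 3 - a)) := by
  have h := intervalIntegral.mul_integral_comp_mul_left (a := 0) (b := a)
    (f := fun t => Real.log (Real.sin t)) 3
  rw [mul_zero] at h
  have hcongr : ∫ t in (0 : ℝ)..a, Real.log (Real.sin (3 * t))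
      = ∫ t in (0 : ℝ)..a, (2 * Real.log 2 + Real.log (Real.sin t)
        + Real.log (Real.sin (Real.pi / 3 - t)) + Real.log (Real.sin (Real.pi / 3 + t))) := by
    refine intervalIntegral.integral_congr_Ioo_of_le ha fun t ht => ?_
    have hs : 0 < Real.sin t := Real.sin_pos_of_pos_of_lt_pi ht.1
      (by linarith [ht.2, Real.pi_pos])
    have hs1 : 0 < Real.sin (Real.pi / 3 - t) := Real.sin_pos_of_pos_of_lt_pi
      (by linarith [ht.2]) (by linarith [ht.1, Real.pi_pos])
    have hs2 : 0 < Real.sin (Real.pi / 3 + t) := Real.sin_pos_of_pos_of_lt_pi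
      (by linarith [ht.1, Real.pi_pos]) (by linarith [ht.2, Real.pi_pos])
    have h4 : Real.log 4 = 2 * Real.log 2 := by
      rw [show (4 : ℝ) = 2 ^ 2 by norm_num, Real.log_pow]; norm_num
    simp only [sin_three_mul_eq_prod]
    rw [Real.log_mul (by positivity) hs2.ne', Real.log_mul (by positivity) hs1.ne',
      Real.log_mul (by norm_num) hs.ne', h4]
  have hi1 : IntervalIntegrable (fun t => Real.log (Real.sin (Real.pi / 3 - t)))
      MeasureTheory.volume 0 a := by
    simpa using (intervalIntegrable_log_sin_apply (Real.pi / 3) (Real.pi / 3 - a)).comp_sub_left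
      (Real.pi / 3)
  have hi2 : IntervalIntegrable (fun t => Real.log (Real.sin (Real.pi / 3 + t)))
      MeasureTheory.volume 0 a := by
    simpa using (intervalIntegrable_log_sin_apply (Real.pi / 3) (Real.pi / 3 + a)).comp_add_left
      (Real.pi / 3)
  have e1 := intervalIntegral.integral_comp_sub_left (a := 0) (b := a)
    (fun t => Real.log (Real.sin t)) (Real.pi / 3)
  have e2 := intervalIntegral.integral_comp_add_left (a := 0) (b := a)
    (fun t => Real.log (Real.sin t)) (Real.pi / 3)
  simp only [integral_log_sin_eq_sub, sub_zero, add_zero] at e1 e2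
  have hc : IntervalIntegrable (fun _ : ℝ => 2 * Real.log 2) MeasureTheory.volume 0 a :=
    intervalIntegrable_const
  have hs := intervalIntegrable_log_sin_apply 0 a
  rw [logSinInt, ← h, hcongr, intervalIntegral.integral_add ((hc.add hs).add hi1) hi2,
    intervalIntegral.integral_add (hc.add hs) hi1, intervalIntegral.integral_add hc hs,
    intervalIntegral.integral_const, e1, e2, ← logSinInt, smul_eq_mul]
  ring

lemma continuousWithinAt_mul_log_zero {f : ℝ → ℝ} {s : Set ℝ} {C : ℝ}
    (hf : ContinuousWithinAt f s 0) (hf0 : f 0 = 0) (hle : ∀ t ∈ s, |t| ≤ C * |f t|) :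
    ContinuousWithinAt (fun t => t * Real.log (f t)) s 0 := by
  have hlim : Tendsto (fun t => C * |f t * Real.log (f t)|) (𝓝[s] 0) (𝓝 0) := by
    have h := ((Real.continuous_mul_log.tendsto (f 0)).comp hf).abs.const_mul C
    simpa [hf0] using h
  unfold ContinuousWithinAt
  simp only [zero_mul]
  refine squeeze_zero_norm' ?_ hlim
  filter_upwards [self_mem_nhdsWithin] with t ht
  rw [norm_mul, Real.norm_eq_abs, Real.norm_eq_abs, abs_mul, ← mul_assoc]
  exact mul_le_mul_of_nonneg_right (hle t ht) (abs_nonneg _)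

/-- The inverse tangent integral as a power series. -/
noncomputable def arctanInt (u : ℝ) : ℝ :=
  ∑' n : ℕ, ((-1) ^ n / (2 * (n : ℝ) + 1)) * (u ^ (2 * n + 1) / (2 * (n : ℝ) + 1))

lemma hasDerivAt_arctanInt {u : ℝ} (hu0 : u ≠ 0) (hu : |u| < 1) :
    HasDerivAt arctanInt (Real.arctan u / u) u := by
  have h := hasDerivAt_tsum_odd (c := fun n : ℕ => (-1) ^ n / (2 * (n : ℝ) + 1)) (C := 1)
    (fun n => ?_) hu
  · refine HasDerivAt.congr_deriv h ?_
    rw [eq_div_iff hu0, ← (Real.hasSum_arctan hu).tsum_eq, ← tsum_mul_right]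
    refine tsum_congr fun n => ?_
    push_cast
    rw [← pow_mul, pow_succ]
    ring
  · have hn : (0 : ℝ) ≤ n := n.cast_nonneg
    rw [abs_div, abs_pow, abs_neg, abs_one, one_pow, abs_of_pos (by positivity), one_mul,
      div_le_iff₀ (by positivity)]
    nlinarith

lemma summable_inv_odd_sq : Summable fun n : ℕ => 1 / (2 * (n : ℝ) + 1) ^ 2 := by
  have h := (summable_nat_add_iff 1).2 (Real.summable_one_div_nat_pow.2 (one_lt_two : 1 < 2))
  refine Summable.of_nonneg_of_le (fun n => by positivity) (fun n => ?_) h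
  push_cast
  gcongr
  linarith [(n.cast_nonneg : (0 : ℝ) ≤ n)]

lemma continuousOn_arctanInt : ContinuousOn arctanInt (Icc 0 1) := by
  refine continuousOn_tsum (fun n => by fun_prop) summable_inv_odd_sq fun n u hu => ?_
  rw [norm_mul, norm_div, norm_div, norm_pow, norm_pow, norm_neg, norm_one, one_pow,
    Real.norm_of_nonneg (by positivity : (0 : ℝ) ≤ 2 * (n : ℝ) + 1), Real.norm_of_nonneg hu.1,
    div_mul_div_comm, one_mul, ← sq]
  gcongr
  exact pow_le_one₀ hu.1 hu.2

lemma logSinInt_sub_logCosInt_pi_div_four :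
    logSinInt (Real.pi / 4) - logCosInt (Real.pi / 4) = -catalan' := by
  have hpi := Real.pi_pos
  have hcos : ∀ t ∈ Icc 0 (Real.pi / 4), 0 < Real.cos t := fun t ht =>
    Real.cos_pos_of_mem_Ioo ⟨by linarith [ht.1], by linarith [ht.2]⟩
  have htan : ContinuousOn Real.tan (Icc 0 (Real.pi / 4)) := fun t ht =>
    (Real.continuousAt_tan.2 (hcos t ht).ne').continuousWithinAt
  have htan0 : ∀ t ∈ Icc 0 (Real.pi / 4), 0 ≤ Real.tan t := fun t ht =>
    Real.tan_nonneg_of_nonneg_of_le_pi_div_two ht.1 (by linarith [ht.2])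
  have htan1 : ∀ t ∈ Icc 0 (Real.pi / 4), Real.tan t ≤ 1 := fun t ht => by
    rw [← Real.tan_pi_div_four]
    exact Real.strictMonoOn_tan.monotoneOn ⟨by linarith [ht.1], by linarith [ht.2]⟩
      ⟨by linarith, by linarith⟩ ht.2
  have hcont : ContinuousOn (fun t => arctanInt (Real.tan t) - t * Real.log (Real.tan t))
      (Icc 0 (Real.pi / 4)) := by
    refine ContinuousOn.sub (continuousOn_arctanInt.comp htan
      fun t ht => ⟨htan0 t ht, htan1 t ht⟩) fun t ht => ?_
    rcases eq_or_lt_of_le ht.1 with h0 | h0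
    · rw [← h0]
      refine continuousWithinAt_mul_log_zero (C := 1) (htan 0 ⟨le_rfl, by linarith⟩) Real.tan_zero
        fun s hs => ?_
      rw [one_mul, abs_of_nonneg hs.1, abs_of_nonneg (htan0 s hs)]
      exact Real.le_tan hs.1 (by linarith [hs.2])
    · have : Real.tan t ≠ 0 := (Real.tan_pos_of_pos_of_lt_pi_div_two h0
        (by linarith [ht.2])).ne'
      exact continuousWithinAt_id.mul ((htan t ht).log this)
  have hderiv : ∀ t ∈ Ioo 0 (Real.pi / 4), HasDerivAt
      (fun t => arctanInt (Real.tan t) - t * Real.log (Real.tan t))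
      (Real.log (Real.cos t) - Real.log (Real.sin t)) t := by
    intro t ht
    have hc := hcos t ⟨ht.1.le, ht.2.le⟩
    have hs : 0 < Real.sin t := Real.sin_pos_of_pos_of_lt_pi ht.1 (by linarith [ht.2])
    have htp : 0 < Real.tan t := Real.tan_pos_of_pos_of_lt_pi_div_two ht.1 (by linarith [ht.2])
    have htl : Real.tan t < 1 := by
      rw [← Real.tan_pi_div_four]
      exact Real.strictMonoOn_tan ⟨by linarith [ht.1], by linarith [ht.2]⟩
        ⟨by linarith, by linarith⟩ ht.2
    have hd := Real.hasDerivAt_tan hc.ne'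
    have h1 := (hasDerivAt_arctanInt htp.ne' (by rwa [abs_of_pos htp])).comp t hd
    have h2 := (hasDerivAt_id t).mul (hd.log htp.ne')
    refine HasDerivAt.congr_deriv (h1.sub h2) ?_
    rw [Real.arctan_tan (by linarith [ht.1]) (by linarith [ht.2]), Real.tan_eq_sin_div_cos,
      Real.log_div hs.ne' hc.ne']
    simp only [id]
    field_simp
    ring
  have hint := intervalIntegral.integral_eq_sub_of_hasDerivAt_of_le (by linarith) hcont hderiv
    ((intervalIntegrable_log_cos_apply _ _).sub (intervalIntegrable_log_sin_apply _ _))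
  rw [intervalIntegral.integral_sub (intervalIntegrable_log_cos_apply _ _)
    (intervalIntegrable_log_sin_apply _ _), ← logSinInt, ← logCosInt, Real.tan_pi_div_four,
    Real.tan_zero, Real.log_one] at hint
  have h1 : arctanInt 1 = catalan' := by
    unfold arctanInt catalan'
    refine tsum_congr fun n => ?_
    rw [one_pow, div_mul_div_comm, mul_one, sq]
  have h0 : arctanInt 0 = 0 := by simp [arctanInt]
  rw [h1, h0] at hint
  linarith

lemma logSinInt_sub_logCosInt_pi_div_twelve :
    logSinInt (Real.pi / 12) - logCosInt (Real.pi / 12) = -(2 / 3) * catalan' := by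
  have hpi := Real.pi_pos
  have h3 := logSinInt_three_mul (a := Real.pi / 12) (by linarith) (by linarith)
  rw [show 3 * (Real.pi / 12) = Real.pi / 4 by ring,
    show Real.pi / 3 + Real.pi / 12 = Real.pi / 2 - Real.pi / 12 by ring,
    show Real.pi / 3 - Real.pi / 12 = Real.pi / 4 by ring] at h3
  have h4 := logCosInt_eq (Real.pi / 4)
  rw [show Real.pi / 2 - Real.pi / 4 = Real.pi / 4 by ring] at h4
  have h12 := logCosInt_eq (Real.pi / 12)
  have hG := logSinInt_sub_logCosInt_pi_div_four
  have hp := logSinInt_pi_div_two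
  linarith

lemma logInt_combination :
    -4 * logCosInt (Real.pi / 6) - 8 * logCosInt (Real.pi / 12)
      - 2 / 3 * logSinInt (Real.pi / 6) - 13 / 9 * Real.pi * Real.log 2 = -(8 / 3) * catalan' := by
  have hpi := Real.pi_pos
  have h12 := logSinInt_two_mul (a := Real.pi / 12) (by linarith) (by linarith)
  have h6 := logSinInt_two_mul (a := Real.pi / 6) (by linarith) (by linarith)
  rw [show 2 * (Real.pi / 12) = Real.pi / 6 by ring] at h12
  rw [show 2 * (Real.pi / 6) = Real.pi / 3 by ring] at h6
  have hc := logCosInt_eq (Real.pi / 6)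
  rw [show Real.pi / 2 - Real.pi / 6 = Real.pi / 3 by ring] at hc
  have hG := logSinInt_sub_logCosInt_pi_div_twelve
  have hp := logSinInt_pi_div_two
  linarith

lemma hasDerivAt_tsum_sin {c : ℕ → ℝ} {C : ℝ} (hc : ∀ k : ℕ, |c k| ≤ C * ((k : ℝ) + 1))
    {t : ℝ} (ht : t ∈ Ioo (-(Real.pi / 2)) (Real.pi / 2)) :
    HasDerivAt (fun t => ∑' k : ℕ, c k * (Real.sin t ^ (2 * k + 1) / (2 * (k : ℝ) + 1)))
      (Real.cos t * ∑' k : ℕ, c k * (Real.sin t ^ 2) ^ k) t := by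
  have h := (hasDerivAt_tsum_odd hc (sin_sq_abs_lt_one ht).2).comp t (Real.hasDerivAt_sin t)
  exact HasDerivAt.congr_deriv h (mul_comm _ _)

lemma abs_centralCoeff_le (k : ℕ) : |centralCoeff k| ≤ 1 * ((k : ℝ) + 1) := by
  rw [abs_of_pos (centralCoeff_pos k)]
  linarith [centralCoeff_le_one k, (k.cast_nonneg : (0 : ℝ) ≤ k)]

lemma tsum_centralCoeff_sin {t : ℝ} (ht : t ∈ Ioo (-(Real.pi / 2)) (Real.pi / 2)) :
    ∑' k : ℕ, centralCoeff k * (Real.sin t ^ (2 * k + 1) / (2 * (k : ℝ) + 1)) = t := by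
  have hd := fun (s : ℝ) (hs : s ∈ Ioo (-(Real.pi / 2)) (Real.pi / 2)) =>
    (hasDerivAt_tsum_sin abs_centralCoeff_le hs).congr_deriv (cos_mul_tsum_centralCoeff hs)
  have h0 : (0 : ℝ) ∈ Ioo (-(Real.pi / 2)) (Real.pi / 2) := by
    constructor <;> linarith [Real.pi_pos]
  refine isOpen_Ioo.eqOn_of_deriv_eq isPreconnected_Ioo
    (fun s hs => (hd s hs).differentiableAt.differentiableWithinAt)
    differentiableOn_id (fun s hs => ?_) h0 (by simp) ht
  rw [(hd s hs).deriv, deriv_id]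

lemma abs_centralCoeff_div_le (k : ℕ) :
    |centralCoeff k / (2 * (k : ℝ) + 1)| ≤ 1 * ((k : ℝ) + 1) := by
  refine le_trans ?_ (abs_centralCoeff_le k)
  rw [abs_div]
  refine div_le_self (abs_nonneg _) ?_
  rw [abs_of_nonneg (by positivity)]
  linarith [(k.cast_nonneg : (0 : ℝ) ≤ k)]

lemma sin_mul_tsum_centralCoeff_div {t : ℝ} (ht : t ∈ Ioo (-(Real.pi / 2)) (Real.pi / 2)) :
    Real.sin t * ∑' k : ℕ, centralCoeff k / (2 * (k : ℝ) + 1) * (Real.sin t ^ 2) ^ k = t := by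
  conv_rhs => rw [← tsum_centralCoeff_sin ht]
  rw [← tsum_mul_left]
  refine tsum_congr fun k => ?_
  ring

/-- An explicit antiderivative used to evaluate the linear coefficient. -/
noncomputable def catalanPrimitive (t : ℝ) : ℝ :=
  (∑' k : ℕ, centralCoeff k * harmonicCoeff k * (Real.sin t ^ (2 * k + 1) / (2 * (k : ℝ) + 1)))
    + 2 / 3 * (∑' k : ℕ, centralCoeff k / (2 * (k : ℝ) + 1) *
        (Real.sin t ^ (2 * k + 1) / (2 * (k : ℝ) + 1)) - t * Real.log (Real.sin t))
    - 26 / 3 * Real.log 2 * t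

lemma catalanPrimitive_pi_div_six :
    catalanPrimitive (Real.pi / 6) = -(8 / 3) * catalan' := by
  have hpi := Real.pi_pos
  have hmem : ∀ t ∈ Icc 0 (Real.pi / 6), t ∈ Ioo (-(Real.pi / 2)) (Real.pi / 2) := fun t ht =>
    ⟨by linarith [ht.1], by linarith [ht.2]⟩
  have hab : ∀ k : ℕ, |centralCoeff k * harmonicCoeff k| ≤ 6 * ((k : ℝ) + 1) :=
    fun k => abs_centralCoeff_mul_le k (abs_harmonicCoeff_le k)
  have hsin : ∀ t ∈ Icc 0 (Real.pi / 6), 0 ≤ Real.sin t := fun t ht =>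
    Real.sin_nonneg_of_nonneg_of_le_pi ht.1 (by linarith [ht.2])
  have hsin_pos : ∀ t ∈ Icc 0 (Real.pi / 6), 0 < t → 0 < Real.sin t := fun t ht h0 =>
    Real.sin_pos_of_pos_of_lt_pi h0 (by linarith [ht.2])
  have hcont : ContinuousOn catalanPrimitive (Icc 0 (Real.pi / 6)) := by
    intro t ht
    refine ((hasDerivAt_tsum_sin hab (hmem t ht)).continuousAt.continuousWithinAt.add
      (ContinuousWithinAt.mul continuousWithinAt_const
        ((hasDerivAt_tsum_sin abs_centralCoeff_div_le
          (hmem t ht)).continuousAt.continuousWithinAt.sub ?_))).sub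
      (continuousWithinAt_const.mul continuousWithinAt_id)
    rcases eq_or_lt_of_le ht.1 with h0 | h0
    · rw [← h0]
      refine continuousWithinAt_mul_log_zero (C := Real.pi / 2)
        Real.continuous_sin.continuousWithinAt Real.sin_zero fun s hs => ?_
      rw [abs_of_nonneg hs.1, abs_of_nonneg (hsin s hs)]
      have h := Real.mul_le_sin hs.1 (by linarith [hs.2])
      calc s = Real.pi / 2 * (2 / Real.pi * s) := by field_simp
        _ ≤ _ := by gcongr
    · exact continuousWithinAt_id.mul
        (Real.continuous_sin.continuousWithinAt.log (hsin_pos t ht h0).ne')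
  have hderiv : ∀ t ∈ Ioo 0 (Real.pi / 6), HasDerivAt catalanPrimitive
      (-4 * Real.log (Real.cos t) - 4 * Real.log (Real.cos (1 / 2 * t))
        - 2 / 3 * Real.log (Real.sin t) - 26 / 3 * Real.log 2) t := by
    intro t ht
    have ht' : t ∈ Icc 0 (Real.pi / 6) := ⟨ht.1.le, ht.2.le⟩
    have hs := hsin_pos t ht' ht.1
    have h1 := hasDerivAt_tsum_sin hab (hmem t ht')
    have h2 := hasDerivAt_tsum_sin abs_centralCoeff_div_le (hmem t ht')
    have h3 := (hasDerivAt_id t).mul ((Real.hasDerivAt_sin t).log hs.ne')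
    have h4 := (hasDerivAt_id t).const_mul (26 / 3 * Real.log 2)
    refine HasDerivAt.congr_deriv ((h1.add ((h2.sub h3).const_mul (2 / 3))).sub h4) ?_
    have e := sin_mul_tsum_centralCoeff_div (hmem t ht')
    set V := ∑' k : ℕ, centralCoeff k / (2 * (k : ℝ) + 1) * (Real.sin t ^ 2) ^ k
    have e' : V = t / Real.sin t := by rw [eq_div_iff hs.ne', mul_comm, e]
    rw [cos_mul_tsum_harmonicCoeff (hmem t ht'), e', show t / 2 = 1 / 2 * t by ring]
    simp only [id]
    ring
  have hi0 : IntervalIntegrable (fun t => Real.log (Real.cos (1 / 2 * t)))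
      MeasureTheory.volume 0 (Real.pi / 6) := by
    have h := (intervalIntegrable_log_cos_apply 0 (Real.pi / 12)).comp_mul_left (c := 1 / 2)
    rwa [zero_div, show Real.pi / 12 / (1 / 2) = Real.pi / 6 by ring] at h
  have hi1 := (intervalIntegrable_log_cos_apply 0 (Real.pi / 6)).const_mul (-4)
  have hi2 := hi0.const_mul 4
  have hi3 := (intervalIntegrable_log_sin_apply 0 (Real.pi / 6)).const_mul (2 / 3)
  have hi4 : IntervalIntegrable (fun _ : ℝ => 26 / 3 * Real.log 2)
      MeasureTheory.volume 0 (Real.pi / 6) := intervalIntegrable_const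
  have hint := intervalIntegral.integral_eq_sub_of_hasDerivAt_of_le (by linarith) hcont hderiv
    (((hi1.sub hi2).sub hi3).sub hi4)
  have e := intervalIntegral.integral_comp_mul_left (a := 0) (b := Real.pi / 6)
    (fun t => Real.log (Real.cos t)) (c := 1 / 2) (by norm_num)
  rw [mul_zero, show 1 / 2 * (Real.pi / 6) = Real.pi / 12 by ring, ← logCosInt, smul_eq_mul] at e
  rw [intervalIntegral.integral_sub ((hi1.sub hi2).sub hi3) hi4,
    intervalIntegral.integral_sub (hi1.sub hi2) hi3, intervalIntegral.integral_sub hi1 hi2,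
    intervalIntegral.integral_const_mul, intervalIntegral.integral_const_mul,
    intervalIntegral.integral_const_mul, intervalIntegral.integral_const, e, ← logCosInt,
    ← logSinInt, smul_eq_mul] at hint
  have h0 : catalanPrimitive 0 = 0 := by simp [catalanPrimitive]
  rw [h0] at hint
  have := logInt_combination
  linarith

lemma tsum_centralCoeff_quarter :
    ∑' k : ℕ, centralCoeff k * (1 / 4) ^ k / (2 * (k : ℝ) + 1) = Real.pi / 3 := by
  have hpi := Real.pi_pos
  have h := tsum_centralCoeff_sin (t := Real.pi / 6) ⟨by linarith, by linarith⟩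
  have h2 : ∑' k : ℕ, centralCoeff k * (1 / 4) ^ k / (2 * (k : ℝ) + 1)
      = 2 * ∑' k : ℕ, centralCoeff k * (Real.sin (Real.pi / 6) ^ (2 * k + 1) /
        (2 * (k : ℝ) + 1)) := by
    rw [← tsum_mul_left]
    refine tsum_congr fun k => ?_
    rw [Real.sin_pi_div_six, pow_succ, pow_mul, show (1 / 2 : ℝ) ^ 2 = 1 / 4 by norm_num]
    ring
  rw [h2, h]
  ring

lemma tsum_centralCoeff_mul_quarter :
    ∑' k : ℕ, centralCoeff k * (1 / 4) ^ k / (2 * (k : ℝ) + 1) *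
      (harmonicCoeff k + 2 / (3 * (2 * (k : ℝ) + 1)) - 8 * Real.log 2)
      = -(16 / 3) * catalan' := by
  have hpi := Real.pi_pos
  have hab : ∀ k : ℕ, |centralCoeff k * harmonicCoeff k| ≤ 6 * ((k : ℝ) + 1) :=
    fun k => abs_centralCoeff_mul_le k (abs_harmonicCoeff_le k)
  have hsum : ∀ {c : ℕ → ℝ} {C : ℝ}, (∀ k : ℕ, |c k| ≤ C * ((k : ℝ) + 1)) →
      Summable fun k : ℕ => c k * (Real.sin (Real.pi / 6) ^ (2 * k + 1) / (2 * (k : ℝ) + 1)) := by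
    intro c C hc
    have hC : 0 ≤ C := by simpa using (abs_nonneg _).trans (hc 0)
    refine ((summable_coeff_mul_pow (c := fun k => c k / (2 * (2 * (k : ℝ) + 1))) (C := C)
      (w := 1 / 4) (fun k => ?_) (by norm_num [abs_lt])).congr fun k => ?_)
    · have hk : (0 : ℝ) ≤ k := k.cast_nonneg
      rw [abs_div, abs_of_pos (by positivity : (0 : ℝ) < 2 * (2 * (k : ℝ) + 1))]
      refine (div_le_self (abs_nonneg _) (by linarith)).trans ((hc k).trans ?_)
      gcongr
      nlinarith
    · rw [Real.sin_pi_div_six, pow_succ, pow_mul, show (1 / 2 : ℝ) ^ 2 = 1 / 4 by norm_num]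
      field_simp
  have hM := catalanPrimitive_pi_div_six
  unfold catalanPrimitive at hM
  have hW := tsum_centralCoeff_sin (t := Real.pi / 6) ⟨by linarith, by linarith⟩
  have hlog : Real.log (Real.sin (Real.pi / 6)) = -Real.log 2 := by
    rw [Real.sin_pi_div_six, one_div, Real.log_inv]
  have hsplit : ∑' k : ℕ, centralCoeff k * (1 / 4) ^ k / (2 * (k : ℝ) + 1) *
      (harmonicCoeff k + 2 / (3 * (2 * (k : ℝ) + 1)) - 8 * Real.log 2)
      = 2 * (∑' k : ℕ, centralCoeff k * harmonicCoeff k *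
          (Real.sin (Real.pi / 6) ^ (2 * k + 1) / (2 * (k : ℝ) + 1))
        + 2 / 3 * ∑' k : ℕ, centralCoeff k / (2 * (k : ℝ) + 1) *
          (Real.sin (Real.pi / 6) ^ (2 * k + 1) / (2 * (k : ℝ) + 1))
        - 8 * Real.log 2 * ∑' k : ℕ, centralCoeff k *
          (Real.sin (Real.pi / 6) ^ (2 * k + 1) / (2 * (k : ℝ) + 1))) := by
    have s1 := hsum hab
    have s2 := (hsum abs_centralCoeff_div_le).mul_left (2 / 3)
    have s3 := (hsum abs_centralCoeff_le).mul_left (8 * Real.log 2)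
    rw [← tsum_mul_left, ← tsum_mul_left, ← s1.tsum_add s2, ← (s1.add s2).tsum_sub s3,
      ← tsum_mul_left]
    refine tsum_congr fun k => ?_
    rw [Real.sin_pi_div_six, pow_succ, pow_mul, show (1 / 2 : ℝ) ^ 2 = 1 / 4 by norm_num]
    field_simp
  rw [hsplit, hW]
  rw [hlog] at hM
  linarith

/-- The holomorphic extension of `wzKernel x 0`. -/
noncomputable def kernelBase (z : ℂ) : ℂ :=
  Complex.exp (-(2 * (Real.log 2 : ℂ)) * z) *
    ((Complex.Gamma (z + 1 / 2) / (√Real.pi : ℝ)) ^ 3 / Complex.Gamma (z + 1) ^ 3)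

/-- The product of the ratios `wzKernel z (j + 1) / wzKernel z j` over `j < k`. -/
noncomputable def kernelRatio (k : ℕ) (z : ℂ) : ℂ :=
  ∏ j ∈ Finset.range k, (z + j + 1 / 2) ^ 3 / (4 * (z + j + 1) * ((j : ℂ) + 1 / 2) ^ 2)

lemma wzKernel_natCast_eq {x : ℝ} (hx : -1 / 2 < x) (k : ℕ) :
    ((wzKernel x k : ℝ) : ℂ) = wzKernel x 0 * kernelRatio k x := by
  induction k with
  | zero => simp [kernelRatio]
  | succ k ih =>
    rw [kernelRatio, Finset.prod_range_succ, ← kernelRatio, ← mul_assoc, ← ih, Nat.cast_succ,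
      wzKernel_add_one_right hx k.cast_nonneg]
    push_cast
    ring

lemma wzKernel_zero_eq (x : ℝ) : ((wzKernel x 0 : ℝ) : ℂ) = kernelBase x := by
  have h1 : Complex.Gamma ((x : ℂ) + 1 / 2) = (Real.Gamma (x + 1 / 2) : ℝ) := by
    rw [← Complex.Gamma_ofReal]; push_cast; rfl
  have h2 : Complex.Gamma ((x : ℂ) + 1) = (Real.Gamma (x + 1) : ℝ) := by
    rw [← Complex.Gamma_ofReal]; push_cast; rfl
  have h3 : Complex.exp (-(2 * (Real.log 2 : ℂ)) * x) = ((2 : ℝ) ^ (-(2 : ℝ) * x) : ℝ) := by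
    rw [Real.rpow_def_of_pos two_pos, Complex.ofReal_exp]
    push_cast
    ring_nf
  rw [kernelBase, h1, h2, h3, wzKernel, add_zero, zero_add, Real.Gamma_one_half_eq,
    ← Complex.ofReal_div, ← Complex.ofReal_pow, ← Complex.ofReal_pow, ← Complex.ofReal_div,
    ← Complex.ofReal_mul]
  congr 1
  rw [div_pow, div_div]
  ring

lemma kernelBase_zero : kernelBase 0 = 1 := by
  have hpi : ((√Real.pi : ℝ) : ℂ) ≠ 0 :=
    Complex.ofReal_ne_zero.2 (Real.sqrt_pos.2 Real.pi_pos).ne'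
  have h1 : Complex.Gamma (1 / 2) = (√Real.pi : ℝ) := by
    rw [← Real.Gamma_one_half_eq, ← Complex.Gamma_ofReal]; push_cast; rfl
  simp only [kernelBase, zero_add, mul_zero, Complex.exp_zero, h1, Complex.Gamma_one]
  rw [div_self hpi]
  simp

lemma hasDerivAt_kernelBase_zero :
    HasDerivAt kernelBase (-(8 * (Real.log 2 : ℂ))) 0 := by
  have hpi : ((√Real.pi : ℝ) : ℂ) ≠ 0 :=
    Complex.ofReal_ne_zero.2 (Real.sqrt_pos.2 Real.pi_pos).ne'
  have h1 : Complex.Gamma (1 / 2) = (√Real.pi : ℝ) := by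
    rw [← Real.Gamma_one_half_eq, ← Complex.Gamma_ofReal]; push_cast; rfl
  have hlog : Complex.log 2 = (Real.log 2 : ℝ) := by
    rw [Complex.ofReal_log (by norm_num)]; norm_num
  have hA : HasDerivAt (fun z : ℂ => Complex.Gamma (z + 1 / 2))
      (-(√Real.pi : ℝ) * (Real.eulerMascheroniConstant + 2 * (Real.log 2 : ℝ))) 0 := by
    refine HasDerivAt.comp_add_const 0 (1 / 2) ?_
    rw [zero_add, ← hlog]
    exact Complex.hasDerivAt_Gamma_one_half
  have hB : HasDerivAt (fun z : ℂ => Complex.Gamma (z + 1))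
      (-(Real.eulerMascheroniConstant : ℂ)) 0 := by
    refine HasDerivAt.comp_add_const 0 1 ?_
    rw [zero_add]
    exact Complex.hasDerivAt_Gamma_one
  have hE := ((hasDerivAt_id (0 : ℂ)).const_mul (-(2 * (Real.log 2 : ℂ)))).cexp
  have h := hE.mul (((hA.div_const (√Real.pi : ℝ)).pow 3).div (hB.pow 3) (by simp))
  refine HasDerivAt.congr_deriv h ?_
  simp only [Pi.pow_apply, Pi.div_apply, id, zero_add, h1, Complex.Gamma_one, mul_zero, Complex.exp_zero]
  have e : -((√Real.pi : ℝ) : ℂ) * (Real.eulerMascheroniConstant + 2 * (Real.log 2 : ℝ))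
      / (√Real.pi : ℝ) = -(Real.eulerMascheroniConstant + 2 * (Real.log 2 : ℝ)) := by
    field_simp
  rw [div_self hpi, e]
  norm_num
  ring

lemma norm_and_re_lt_of_mem_ball {z : ℂ} (hz : z ∈ Metric.ball (0 : ℂ) (1 / 4)) :
    ‖z‖ < 1 / 4 ∧ |z.re| < 1 / 4 := by
  rw [mem_ball_zero_iff] at hz
  exact ⟨hz, (Complex.abs_re_le_norm z).trans_lt hz⟩

lemma differentiableAt_Gamma_of_re_pos {s : ℂ} (hs : 0 < s.re) :
    DifferentiableAt ℂ Complex.Gamma s := by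
  refine Complex.differentiableAt_Gamma s fun m h => ?_
  rw [h, Complex.neg_re, Complex.natCast_re] at hs
  linarith [(m.cast_nonneg : (0 : ℝ) ≤ m)]

lemma differentiableOn_kernelBase :
    DifferentiableOn ℂ kernelBase (Metric.ball 0 (1 / 4)) := by
  intro z hz
  obtain ⟨-, hre⟩ := norm_and_re_lt_of_mem_ball hz
  rw [abs_lt] at hre
  have h1 : 0 < (z + 1 / 2).re := by norm_num; linarith
  have h2 : 0 < (z + 1).re := by norm_num; linarith
  have hA : DifferentiableAt ℂ (fun z : ℂ => Complex.Gamma (z + 1 / 2)) z :=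
    (differentiableAt_Gamma_of_re_pos h1).comp z (by fun_prop)
  have hB : DifferentiableAt ℂ (fun z : ℂ => Complex.Gamma (z + 1)) z :=
    (differentiableAt_Gamma_of_re_pos h2).comp z (by fun_prop)
  have hE : DifferentiableAt ℂ (fun z : ℂ => Complex.exp (-(2 * (Real.log 2 : ℂ)) * z)) z := by
    fun_prop
  exact (hE.mul (((hA.div_const _).pow 3).div (hB.pow 3)
    (pow_ne_zero 3 (Complex.Gamma_ne_zero_of_re_pos h2)))).differentiableWithinAt

lemma add_natCast_add_one_norm {z : ℂ} (hz : ‖z‖ < 1 / 4) (j : ℕ) :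
    (j : ℝ) + 3 / 4 ≤ ‖z + j + 1‖ := by
  have h := norm_sub_norm_le ((j : ℂ) + 1) (-z)
  have h1 : ‖(j : ℂ) + 1‖ = (j : ℝ) + 1 := by
    rw [← Nat.cast_succ, Complex.norm_natCast]; push_cast; rfl
  rw [h1, norm_neg, sub_neg_eq_add, show (j : ℂ) + 1 + z = z + j + 1 by ring] at h
  linarith

lemma norm_kernelRatio_le {z : ℂ} (hz : ‖z‖ < 1 / 4) (k : ℕ) :
    ‖kernelRatio k z‖ ≤ (9 / 16) ^ k := by
  unfold kernelRatio
  rw [Complex.norm_prod]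
  refine (Finset.prod_le_prod (fun j _ => norm_nonneg _)
    (fun j _ => ?_ : ∀ j ∈ Finset.range k, _ ≤ (9 / 16 : ℝ))).trans_eq
      (by rw [Finset.prod_const, Finset.card_range])
  have hj : (0 : ℝ) ≤ j := j.cast_nonneg
  have h1 := add_natCast_add_one_norm hz j
  have h3 : ‖(j : ℂ) + 1 / 2‖ = (j : ℝ) + 1 / 2 := by
    have : (j : ℂ) + 1 / 2 = (((j : ℝ) + 1 / 2 : ℝ) : ℂ) := by push_cast; rfl
    rw [this, Complex.norm_of_nonneg (by positivity)]
  have h2 : ‖z + j + 1 / 2‖ ≤ (j : ℝ) + 3 / 4 := by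
    rw [add_assoc]
    refine (norm_add_le _ _).trans ?_
    rw [h3]
    linarith
  rw [norm_div, norm_pow, norm_mul, norm_mul, norm_pow, h3, Complex.norm_ofNat]
  calc ‖z + j + 1 / 2‖ ^ 3 / (4 * ‖z + j + 1‖ * ((j : ℝ) + 1 / 2) ^ 2)
      ≤ ((j : ℝ) + 3 / 4) ^ 3 / (4 * ((j : ℝ) + 3 / 4) * ((j : ℝ) + 1 / 2) ^ 2) := by gcongr
    _ ≤ 9 / 16 := by
      rw [div_le_div_iff₀ (by positivity) (by positivity)]
      have : 0 ≤ ((j : ℝ) + 3 / 4) * (9 * ((j : ℝ) + 1 / 2) ^ 2 - 4 * ((j : ℝ) + 3 / 4) ^ 2) :=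
        mul_nonneg (by positivity) (by nlinarith)
      nlinarith

/-- The summand of the holomorphic correction series. -/
noncomputable def ratTerm (k : ℕ) (z : ℂ) : ℂ :=
  (2 * z + 6 * k + 3) / ((k : ℂ) + 1 / 2) ^ 2 * kernelRatio k z

lemma norm_ratTerm_le {z : ℂ} (hz : ‖z‖ < 1 / 4) (k : ℕ) :
    ‖ratTerm k z‖ ≤ 16 * (9 / 16) ^ k := by
  have hk : (0 : ℝ) ≤ k := k.cast_nonneg
  have h3 : ‖(k : ℂ) + 1 / 2‖ = (k : ℝ) + 1 / 2 := by
    have : (k : ℂ) + 1 / 2 = (((k : ℝ) + 1 / 2 : ℝ) : ℂ) := by push_cast; rfl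
    rw [this, Complex.norm_of_nonneg (by positivity)]
  have h4 : ‖2 * z + 6 * k + 3‖ ≤ 6 * (k : ℝ) + 4 := by
    refine (norm_add₃_le).trans ?_
    simp only [norm_mul, Complex.norm_ofNat, Complex.norm_natCast]
    linarith
  unfold ratTerm
  rw [norm_mul, norm_div, norm_pow, h3]
  refine mul_le_mul ?_ (norm_kernelRatio_le hz k) (norm_nonneg _) (by norm_num)
  rw [div_le_iff₀ (by positivity)]
  nlinarith

lemma differentiableOn_ratTerm (k : ℕ) :
    DifferentiableOn ℂ (ratTerm k) (Metric.ball 0 (1 / 4)) := by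
  intro z hz
  obtain ⟨hn, -⟩ := norm_and_re_lt_of_mem_ball hz
  have hr : DifferentiableAt ℂ (kernelRatio k) z := by
    unfold kernelRatio
    refine DifferentiableAt.fun_finsetProd fun j _ => ?_
    refine DifferentiableAt.div (by fun_prop) (by fun_prop) ?_
    have h1 : z + j + 1 ≠ 0 := fun h => by
      have h' := add_natCast_add_one_norm hn j
      rw [h, norm_zero] at h'
      linarith [(j.cast_nonneg : (0 : ℝ) ≤ j)]
    have h2 : (j : ℂ) + 1 / 2 ≠ 0 := by
      have : (j : ℂ) + 1 / 2 = (((j : ℝ) + 1 / 2 : ℝ) : ℂ) := by push_cast; rfl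
      rw [this]
      exact Complex.ofReal_ne_zero.2 (by positivity)
    exact mul_ne_zero (mul_ne_zero (by norm_num) h1) (pow_ne_zero 2 h2)
  have hl : DifferentiableAt ℂ (fun z : ℂ => (2 * z + 6 * k + 3) / ((k : ℂ) + 1 / 2) ^ 2) z := by
    fun_prop
  exact (hl.mul hr).differentiableWithinAt

lemma summable_ratTerm_bound : Summable fun k : ℕ => (16 : ℝ) * (9 / 16) ^ k :=
  (summable_geometric_of_lt_one (by norm_num) (by norm_num)).mul_left 16

lemma kernelRatio_zero (k : ℕ) :
    kernelRatio k 0 = ((centralCoeff k * (1 / 4) ^ k : ℝ) : ℂ) := by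
  induction k with
  | zero => simp [kernelRatio, centralCoeff, halfPoch]
  | succ k ih =>
    have h2 : centralCoeff (k + 1) = ((k : ℝ) + 1 / 2) * centralCoeff k / ((k : ℝ) + 1) := by
      rw [← centralCoeff_succ]; field_simp
    rw [kernelRatio, Finset.prod_range_succ, ← kernelRatio, ih, h2]
    have e : ((0 : ℂ) + k + 1 / 2) ^ 3 / (4 * (0 + k + 1) * ((k : ℂ) + 1 / 2) ^ 2)
        = ((((k : ℝ) + 1 / 2) / (4 * ((k : ℝ) + 1)) : ℝ) : ℂ) := by
      have : ((k : ℝ) + 1 / 2) / (4 * ((k : ℝ) + 1))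
          = ((k : ℝ) + 1 / 2) ^ 3 / (4 * ((k : ℝ) + 1) * ((k : ℝ) + 1 / 2) ^ 2) := by
        field_simp
      rw [this]
      push_cast
      ring
    rw [e, ← Complex.ofReal_mul]
    congr 1
    field_simp
    ring

lemma hasDerivAt_kernelRatio_zero (k : ℕ) :
    HasDerivAt (kernelRatio k) (kernelRatio k 0 * harmonicCoeff k) 0 := by
  induction k with
  | zero =>
    have : kernelRatio 0 = fun _ => 1 := by funext z; simp [kernelRatio]
    rw [this]
    simpa [harmonicCoeff] using hasDerivAt_const (0 : ℂ) (1 : ℂ)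
  | succ k ih =>
    have h2 : (k : ℂ) + 1 / 2 ≠ 0 := by
      have : (k : ℂ) + 1 / 2 = (((k : ℝ) + 1 / 2 : ℝ) : ℂ) := by push_cast; rfl
      rw [this]
      exact Complex.ofReal_ne_zero.2 (by positivity)
    have h1 : (k : ℂ) + 1 ≠ 0 := Nat.cast_add_one_ne_zero k
    have hfun : kernelRatio (k + 1) = fun z => kernelRatio k z *
        ((z + k + 1 / 2) ^ 3 / (4 * (z + k + 1) * ((k : ℂ) + 1 / 2) ^ 2)) := by
      funext z
      rw [kernelRatio, Finset.prod_range_succ, ← kernelRatio]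
    have hnum : HasDerivAt (fun z : ℂ => (z + k + 1 / 2) ^ 3)
        (3 * ((k : ℂ) + 1 / 2) ^ 2) 0 := by
      have h := (((hasDerivAt_id (0 : ℂ)).add_const (k : ℂ)).add_const (1 / 2 : ℂ)).pow 3
      exact HasDerivAt.congr_deriv h (by simp)
    have hden : HasDerivAt (fun z : ℂ => 4 * (z + k + 1) * ((k : ℂ) + 1 / 2) ^ 2)
        (4 * ((k : ℂ) + 1 / 2) ^ 2) 0 := by
      have h := ((((hasDerivAt_id (0 : ℂ)).add_const (k : ℂ)).add_const (1 : ℂ)).const_mul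
        4).mul_const (((k : ℂ) + 1 / 2) ^ 2)
      exact HasDerivAt.congr_deriv h (by simp)
    have hd := ih.mul (hnum.div hden (by rw [zero_add]; exact mul_ne_zero (mul_ne_zero (by norm_num) h1) (pow_ne_zero 2 h2)))
    rw [hfun]
    refine HasDerivAt.congr_deriv hd ?_
    have hh : harmonicCoeff (k + 1)
        = harmonicCoeff k + (3 / ((k : ℝ) + 1 / 2) - 1 / ((k : ℝ) + 1)) := by
      unfold harmonicCoeff
      rw [Finset.sum_range_succ]
    rw [hh]
    simp only [zero_add, Pi.div_apply]
    push_cast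
    clear hd hnum hden hfun
    generalize (k : ℂ) + 1 / 2 = d at h2 ⊢
    generalize (k : ℂ) + 1 = e at h1 ⊢
    field_simp

lemma ratTerm_zero (k : ℕ) : ratTerm k 0
    = ((12 * (centralCoeff k * (1 / 4) ^ k / (2 * (k : ℝ) + 1)) : ℝ) : ℂ) := by
  have e : ((2 : ℂ) * 0 + 6 * k + 3) / ((k : ℂ) + 1 / 2) ^ 2
      = ((12 / (2 * (k : ℝ) + 1) : ℝ) : ℂ) := by
    have : 12 / (2 * (k : ℝ) + 1) = (6 * (k : ℝ) + 3) / ((k : ℝ) + 1 / 2) ^ 2 := by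
      field_simp
      ring
    rw [this]
    push_cast
    ring
  rw [ratTerm, e, kernelRatio_zero, ← Complex.ofReal_mul]
  congr 1
  ring

lemma hasDerivAt_ratTerm_zero (k : ℕ) : HasDerivAt (ratTerm k)
    ((12 * (centralCoeff k * (1 / 4) ^ k / (2 * (k : ℝ) + 1) *
      (harmonicCoeff k + 2 / (3 * (2 * (k : ℝ) + 1)))) : ℝ) : ℂ) 0 := by
  have hl : HasDerivAt (fun z : ℂ => (2 * z + 6 * k + 3) / ((k : ℂ) + 1 / 2) ^ 2)
      (2 / ((k : ℂ) + 1 / 2) ^ 2) 0 := by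
    have h := ((((hasDerivAt_id (0 : ℂ)).const_mul 2).add_const (6 * k : ℂ)).add_const
      (3 : ℂ)).div_const (((k : ℂ) + 1 / 2) ^ 2)
    exact HasDerivAt.congr_deriv h (by simp)
  refine HasDerivAt.congr_deriv (hl.mul (hasDerivAt_kernelRatio_zero k)) ?_
  rw [kernelRatio_zero]
  have e : 12 * (centralCoeff k * (1 / 4) ^ k / (2 * (k : ℝ) + 1) *
      (harmonicCoeff k + 2 / (3 * (2 * (k : ℝ) + 1))))
      = 2 / ((k : ℝ) + 1 / 2) ^ 2 * (centralCoeff k * (1 / 4) ^ k)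
        + (2 * 0 + 6 * k + 3) / ((k : ℝ) + 1 / 2) ^ 2 *
          (centralCoeff k * (1 / 4) ^ k * harmonicCoeff k) := by
    field_simp
    ring
  rw [e]
  push_cast
  ring

/-- The holomorphic correction function `Φ` with `∑' k, wzF x k = -x ^ 2 * Φ x`. -/
noncomputable def correction (z : ℂ) : ℂ := kernelBase z * ∑' k : ℕ, ratTerm k z

lemma differentiableOn_tsum_ratTerm :
    DifferentiableOn ℂ (fun z => ∑' k : ℕ, ratTerm k z) (Metric.ball 0 (1 / 4)) :=
  Complex.differentiableOn_tsum_of_summable_norm summable_ratTerm_bound differentiableOn_ratTerm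
    Metric.isOpen_ball fun k _ hz => norm_ratTerm_le (norm_and_re_lt_of_mem_ball hz).1 k

lemma tsum_ratTerm_zero : ∑' k : ℕ, ratTerm k 0 = ((4 * Real.pi : ℝ) : ℂ) := by
  rw [tsum_congr ratTerm_zero, ← Complex.ofReal_tsum, tsum_mul_left, tsum_centralCoeff_quarter]
  congr 1
  ring

lemma deriv_tsum_ratTerm_zero : deriv (fun z => ∑' k : ℕ, ratTerm k z) 0
    = ((-64 * catalan' + 32 * Real.pi * Real.log 2 : ℝ) : ℂ) := by
  have h0 : (0 : ℂ) ∈ Metric.ball (0 : ℂ) (1 / 4) := Metric.mem_ball_self (by norm_num)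
  have hs := Complex.hasSum_deriv_of_summable_norm summable_ratTerm_bound differentiableOn_ratTerm
    Metric.isOpen_ball (fun k _ hz => norm_ratTerm_le (norm_and_re_lt_of_mem_ball hz).1 k) h0
  simp only [fun k => (hasDerivAt_ratTerm_zero k).deriv] at hs
  have hs1 := Complex.summable_ofReal.1 hs.summable
  have hs2 : Summable fun k : ℕ =>
      12 * (centralCoeff k * (1 / 4) ^ k / (2 * (k : ℝ) + 1)) := by
    have h := Summable.of_norm_bounded summable_ratTerm_bound
      fun k => norm_ratTerm_le (z := 0) (by norm_num) k
    simp only [ratTerm_zero] at h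
    exact Complex.summable_ofReal.1 h
  rw [← hs.tsum_eq, ← Complex.ofReal_tsum]
  congr 1
  have e := tsum_centralCoeff_mul_quarter
  have e0 := tsum_centralCoeff_quarter
  have h := hs1.tsum_sub (hs2.mul_left (8 * Real.log 2))
  rw [tsum_mul_left (a := 8 * Real.log 2), tsum_mul_left (a := 12)
    (f := fun k : ℕ => centralCoeff k * (1 / 4) ^ k / (2 * (k : ℝ) + 1)), e0] at h
  have h' : ∑' k : ℕ, (12 * (centralCoeff k * (1 / 4) ^ k / (2 * (k : ℝ) + 1) *
        (harmonicCoeff k + 2 / (3 * (2 * (k : ℝ) + 1)))) - 8 * Real.log 2 *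
        (12 * (centralCoeff k * (1 / 4) ^ k / (2 * (k : ℝ) + 1))))
      = 12 * (-(16 / 3) * catalan') := by
    rw [← e, ← tsum_mul_left]
    refine tsum_congr fun k => ?_
    ring
  rw [h'] at h
  linarith

lemma differentiableOn_correction :
    DifferentiableOn ℂ correction (Metric.ball 0 (1 / 4)) :=
  differentiableOn_kernelBase.mul differentiableOn_tsum_ratTerm

lemma correction_zero : correction 0 = ((4 * Real.pi : ℝ) : ℂ) := by
  rw [correction, kernelBase_zero, one_mul, tsum_ratTerm_zero]

lemma deriv_correction_zero : deriv correction 0 = ((-64 * catalan' : ℝ) : ℂ) := by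
  have h0 : Metric.ball (0 : ℂ) (1 / 4) ∈ 𝓝 0 := Metric.ball_mem_nhds _ (by norm_num)
  have h := hasDerivAt_kernelBase_zero.mul (differentiableOn_tsum_ratTerm.differentiableAt
    h0).hasDerivAt
  refine (HasDerivAt.deriv h).trans ?_
  rw [kernelBase_zero, tsum_ratTerm_zero, deriv_tsum_ratTerm_zero]
  push_cast
  ring

lemma isBigO_sub_linear_of_differentiableOn {f : ℂ → ℂ} {s : Set ℂ} (hs : s ∈ 𝓝 0)
    (hf : DifferentiableOn ℂ f s) :
    (fun z => f z - f 0 - deriv f 0 * z) =O[𝓝 0] fun z => z ^ 2 := by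
  have hg := ((Complex.differentiableOn_dslope hs).2 hf).differentiableAt hs
  have h := (Asymptotics.isBigO_refl (fun z : ℂ => z) (𝓝 0)).mul hg.hasDerivAt.isBigO_sub
  refine (h.congr_left fun z => ?_).congr_right fun z => by ring
  have h1 := sub_smul_dslope f 0 z
  rw [sub_zero, smul_eq_mul] at h1
  rw [mul_sub, h1, dslope_same]
  ring

lemma tsum_wzF_eq_correction {x : ℝ} (hx : -1 / 2 < x) :
    ((∑' k : ℕ, wzF x k : ℝ) : ℂ) = -(x : ℂ) ^ 2 * correction x := by
  rw [Complex.ofReal_tsum, correction, ← mul_assoc, ← tsum_mul_left]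
  refine tsum_congr fun k => ?_
  have h := wzKernel_natCast_eq hx k
  rw [wzKernel_zero_eq] at h
  rw [wzF, ratTerm]
  push_cast
  rw [h]
  ring

lemma summand_eq_wzG {t : ℝ} (ht : -1 / 2 < t) :
    (2 : ℝ) ^ (-(2 : ℝ) * t) * (pochG (1 / 2) t / pochG 1 t) ^ 3 * (6 * t + 1) = wzG t 0 := by
  have hpi : √Real.pi ≠ 0 := (Real.sqrt_pos.2 Real.pi_pos).ne'
  have hG : Real.Gamma (t + 1) ≠ 0 := (Real.Gamma_pos_of_pos (by linarith)).ne'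
  rw [wzG, wzKernel, pochG, pochG, Real.Gamma_one, Real.Gamma_one_half_eq, add_zero, zero_add,
    Real.Gamma_one_half_eq, add_comm (1 / 2) t, add_comm 1 t, mul_zero, add_zero]
  field_simp

/-- As `x → 0`,
`(1/4) ∑_{n≥0} 2^{-2(n+x)} ((1/2)_{n+x}/(1)_{n+x})³ (6(n+x)+1)
 = 1/π - π x² + 16 G x³ + O(x⁴)`. -/
theorem identity1_expansion :
    (fun x : ℝ =>
      (1/4 : ℝ) * (∑' n : ℕ,
          (2 : ℝ) ^ (-(2 : ℝ) * ((n : ℝ) + x)) *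
            (pochG (1/2) ((n : ℝ) + x) / pochG 1 ((n : ℝ) + x)) ^ 3 *
            (6 * ((n : ℝ) + x) + 1))
        - (1 / Real.pi - Real.pi * x ^ 2 + 16 * catalan' * x ^ 3))
      =O[nhds 0] (fun x : ℝ => x ^ 4) := by
  have hball : Metric.ball (0 : ℂ) (1 / 4) ∈ 𝓝 0 := Metric.ball_mem_nhds _ (by norm_num)
  have hofReal : Tendsto (fun x : ℝ => (x : ℂ)) (𝓝 0) (𝓝 0) := by
    simpa using Complex.continuous_ofReal.tendsto 0
  have hO := (isBigO_sub_linear_of_differentiableOn hball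
    differentiableOn_correction).comp_tendsto hofReal
  rw [correction_zero, deriv_correction_zero] at hO
  have hmul := ((Asymptotics.isBigO_refl (fun x : ℝ => (x : ℂ) ^ 2) (𝓝 0)).mul hO).const_mul_left
    (-(1 / 4))
  have hev : ∀ᶠ x : ℝ in 𝓝 0, x ∈ Ioo (-1 / 2 : ℝ) 1 :=
    Ioo_mem_nhds (by norm_num) (by norm_num)
  rw [← Asymptotics.isBigO_norm_norm] at hmul ⊢
  refine hmul.congr' ?_ ?_
  · filter_upwards [hev] with x hx
    have hsum : ∑' n : ℕ, (2 : ℝ) ^ (-(2 : ℝ) * ((n : ℝ) + x)) *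
        (pochG (1/2) ((n : ℝ) + x) / pochG 1 ((n : ℝ) + x)) ^ 3 * (6 * ((n : ℝ) + x) + 1)
        = 4 / Real.pi + ∑' k : ℕ, wzF x k := by
      rw [← tsum_wzG_eq hx.1 hx.2.le]
      exact tsum_congr fun n =>
        summand_eq_wzG (by linarith [hx.1, (n.cast_nonneg : (0 : ℝ) ≤ n)])
    rw [hsum, ← Complex.norm_real]
    congr 1
    have hc := tsum_wzF_eq_correction hx.1
    simp only [Function.comp_apply]
    generalize ∑' k : ℕ, wzF x k = S at hc ⊢
    push_cast
    rw [hc]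
    ring
  · refine Eventually.of_forall fun x => ?_
    simp only [Function.comp_apply]
    rw [← pow_add, norm_pow, norm_pow, Complex.norm_real]
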